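/- arXiv:1507.04838 — 2 statements merged into one kernel-verified Lean document; each statement's English description precedes it below -/
import Mathlib

section
/- For all n ≥ 2, the number of idempotents of the Jones monoid J_n of rank n − 2 is e_{n;·,n−2} = 3n − 5. -/
open Relation

/-! ### The partition monoid and its planar submonoids -/

/-- Vertices of a partition diagram: `Sum.inl i` is the upper vertex `i`,
`Sum.inr i` is the lower vertex `i′`. -/
abbrev PV (n : ℕ) := Fin n ⊕ Fin n

/-- An element of the partition monoid `P_n`: a set partition of the `2n` vertices,
encoded as an equivalence relation (setoid). -/
abbrev PElt (n : ℕ) := Setoid (PV n)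

/-- Three layers of vertices, used to form products. -/
abbrev TV (n : ℕ) := Fin n ⊕ (Fin n ⊕ Fin n)

/-- Embedding of the vertices of the upper factor into the three layers. -/
def upEmb {n : ℕ} : PV n → TV n
  | .inl i => .inl i
  | .inr i => .inr (.inl i)

/-- Embedding of the vertices of the lower factor into the three layers. -/
def downEmb {n : ℕ} : PV n → TV n
  | .inl i => .inr (.inl i)
  | .inr i => .inr (.inr i)

/-- Embedding of the vertices of the product into the three layers. -/
def outEmb {n : ℕ} : PV n → TV n
  | .inl i => .inl i
  | .inr i => .inr (.inr i)

/-- The stacked graph of `a` on `b`: relations of `a` on layers 1–2 together with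
relations of `b` on layers 2–3. -/
def stackRel {n : ℕ} (a b : PElt n) : TV n → TV n → Prop := fun x y =>
  (∃ p q : PV n, a.r p q ∧ x = upEmb p ∧ y = upEmb q) ∨
  (∃ p q : PV n, b.r p q ∧ x = downEmb p ∧ y = downEmb q)

/-- The finest common coarsening (transitive closure) of the stacked graph. -/
def stackSetoid {n : ℕ} (a b : PElt n) : Setoid (TV n) :=
  EqvGen.setoid (stackRel a b)

/-- The product in the partition monoid: restrict the coarsening of the stacked graph
to the outer two layers. -/
def pmul {n : ℕ} (a b : PElt n) : PElt n :=
  Setoid.comap outEmb (stackSetoid a b)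

/-- The identity of the partition monoid: blocks `{i, i′}`. -/
def pid (n : ℕ) : PElt n :=
  ⟨fun x y => Sum.elim id id x = Sum.elim id id y,
    ⟨fun _ => rfl, fun h => h.symm, fun h₁ h₂ => h₁.trans h₂⟩⟩

/-- A vertex of the triple-layer graph lies in the identified middle row. -/
def isMiddle {n : ℕ} : TV n → Prop
  | .inr (.inl _) => True
  | _ => False

/-- `m(a,b)`: the number of floating components (components of the stacked graph of `a` on `b`
contained entirely in the identified middle row). -/
noncomputable def floatCount {n : ℕ} (a b : PElt n) : ℕ :=
  Nat.card {c : Quotient (stackSetoid a b) //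
    ∀ x : TV n, Quotient.mk (stackSetoid a b) x = c → isMiddle x}

/-- A block (equivalence class) is a transversal if it contains both an upper
and a lower vertex. -/
def IsTransClass {n : ℕ} (a : PElt n) (c : Quotient a) : Prop :=
  (∃ i : Fin n, Quotient.mk a (.inl i) = c) ∧ (∃ j : Fin n, Quotient.mk a (.inr j) = c)

/-- The rank of a partition: the number of transversal blocks. -/
noncomputable def prank {n : ℕ} (a : PElt n) : ℕ :=
  Nat.card {c : Quotient a // IsTransClass a c}

/-- Position of a vertex in the boundary order `1, …, n, n′, …, 1′` of the rectangle. -/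
def ordIdx (n : ℕ) : PV n → ℕ
  | .inl i => i.val
  | .inr i => 2 * n - 1 - i.val

/-- Planarity: the partition is non-crossing with respect to the boundary order
`1 < ⋯ < n < n′ < ⋯ < 1′`. -/
def IsPlanar {n : ℕ} (a : PElt n) : Prop :=
  ¬ ∃ w x y z : PV n, ordIdx n w < ordIdx n x ∧ ordIdx n x < ordIdx n y ∧
      ordIdx n y < ordIdx n z ∧ a.r w y ∧ a.r x z ∧ ¬ a.r w x

/-- The size of the block containing a given vertex. -/
noncomputable def blockCard {n : ℕ} (a : PElt n) (x : PV n) : ℕ :=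
  Nat.card {y : PV n // a.r x y}

/-- The Motzkin monoid: planar partitions with all blocks of size at most 2. -/
def Motzkin (n : ℕ) : Set (PElt n) :=
  {a | IsPlanar a ∧ ∀ x : PV n, blockCard a x ≤ 2}

/-- The Jones (Temperley–Lieb) monoid: planar partitions with all blocks of size
exactly 2. -/
def Jones (n : ℕ) : Set (PElt n) :=
  {a | IsPlanar a ∧ ∀ x : PV n, blockCard a x = 2}

/-! ### The interface graph -/

/-- Lower edge of the interface graph `Γ(a)`: a block `{i,j}` of `a` on upper vertices. -/
def LowEdge {n : ℕ} (a : PElt n) (i j : Fin n) : Prop :=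
  i ≠ j ∧ a.r (.inl i) (.inl j)

/-- Upper edge of the interface graph `Γ(a)`: a block `{i′,j′}` of `a` on lower vertices. -/
def UpEdge {n : ℕ} (a : PElt n) (i j : Fin n) : Prop :=
  i ≠ j ∧ a.r (.inr i) (.inr j)

/-- Vertex `i` of `Γ(a)` carries a lower edge. -/
def hasLow {n : ℕ} (a : PElt n) (i : Fin n) : Prop := ∃ j, LowEdge a i j

/-- Vertex `i` of `Γ(a)` carries an upper edge. -/
def hasUp {n : ℕ} (a : PElt n) (i : Fin n) : Prop := ∃ j, UpEdge a i j

/-- Vertex `i` is active downwards: the upper vertex `i` lies in a transversal of `a`. -/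
def activeDown {n : ℕ} (a : PElt n) (i : Fin n) : Prop := ∃ j : Fin n, a.r (.inl i) (.inr j)

/-- Vertex `i` is active upwards: the lower vertex `i′` lies in a transversal of `a`. -/
def activeUp {n : ℕ} (a : PElt n) (i : Fin n) : Prop := ∃ j : Fin n, a.r (.inr i) (.inl j)

/-- Vertex `i` is inert downwards: the upper vertex `i` is a singleton block of `a`. -/
def inertDown {n : ℕ} (a : PElt n) (i : Fin n) : Prop := ∀ y, a.r (.inl i) y → y = .inl i

/-- Vertex `i` is inert upwards: the lower vertex `i′` is a singleton block of `a`. -/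
def inertUp {n : ℕ} (a : PElt n) (i : Fin n) : Prop := ∀ y, a.r (.inr i) y → y = .inr i

/-- Adjacency in the interface graph `Γ(a)`. -/
def gedge {n : ℕ} (a : PElt n) (i j : Fin n) : Prop := LowEdge a i j ∨ UpEdge a i j

/-- Connectivity in the interface graph `Γ(a)`. -/
def gconn {n : ℕ} (a : PElt n) : Fin n → Fin n → Prop := EqvGen (gedge a)

/-- `θ` is (the vertex set of) a connected component of `Γ(a)`. -/
def IsComp {n : ℕ} (a : PElt n) (θ : Set (Fin n)) : Prop :=
  θ.Nonempty ∧ ∀ i ∈ θ, ∀ j : Fin n, (gconn a i j ↔ j ∈ θ)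

/-- `θ` is a cycle component of `Γ(a)`: every vertex carries both a lower and an upper edge. -/
def IsCycleComp {n : ℕ} (a : PElt n) (θ : Set (Fin n)) : Prop :=
  IsComp a θ ∧ ∀ i ∈ θ, hasLow a i ∧ hasUp a i

/-- `θ` is a path component of `Γ(a)`: some vertex misses an edge on some side. -/
def IsPathComp {n : ℕ} (a : PElt n) (θ : Set (Fin n)) : Prop :=
  IsComp a θ ∧ ∃ i ∈ θ, ¬ hasLow a i ∨ ¬ hasUp a i

/-- An inert path: every terminus is inert on its free side. -/
def IsInertPathComp {n : ℕ} (a : PElt n) (θ : Set (Fin n)) : Prop :=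
  IsPathComp a θ ∧ ∀ i ∈ θ,
    (¬ hasLow a i → inertDown a i) ∧ (¬ hasUp a i → inertUp a i)

/-- A trans-active path: even length (its two free ends lie on opposite sides) with
both termini active on their free sides. -/
def IsTransActivePathComp {n : ℕ} (a : PElt n) (θ : Set (Fin n)) : Prop :=
  IsPathComp a θ ∧
  (∃! i : Fin n, i ∈ θ ∧ ¬ hasLow a i) ∧ (∃! i : Fin n, i ∈ θ ∧ ¬ hasUp a i) ∧
  ∀ i ∈ θ, (¬ hasLow a i → activeDown a i) ∧ (¬ hasUp a i → activeUp a i)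

/-- The number of edges of `Γ(a)` contained in `θ` (its length, for a component `θ`). -/
noncomputable def compEdgeCount {n : ℕ} (a : PElt n) (θ : Set (Fin n)) : ℕ :=
  Nat.card {p : Fin n × Fin n // p.1 < p.2 ∧ p.1 ∈ θ ∧ p.2 ∈ θ ∧ LowEdge a p.1 p.2} +
  Nat.card {p : Fin n × Fin n // p.1 < p.2 ∧ p.1 ∈ θ ∧ p.2 ∈ θ ∧ UpEdge a p.1 p.2}

/-! ### The map `α ↦ α̂` and the sets `D`, `Θ(δ)` -/

/-- The 0-based position of `i` among the upward-active vertices. -/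
noncomputable def posUp {n : ℕ} (a : PElt n) (i : Fin n) : ℕ :=
  Nat.card {j : Fin n // j < i ∧ activeUp a j}

/-- The 0-based position of `i` among the downward-active vertices. -/
noncomputable def posDown {n : ℕ} (a : PElt n) (i : Fin n) : ℕ :=
  Nat.card {j : Fin n // j < i ∧ activeDown a j}

/-- `i` and `j` are consecutive upward-active vertices paired in forming `α̂`
(`i` in an even position `2t`, `j` in position `2t+1 < 2⌊r/2⌋`). -/
noncomputable def pairedUp {n : ℕ} (a : PElt n) (i j : Fin n) : Prop :=
  activeUp a i ∧ activeUp a j ∧ Even (posUp a i) ∧ posUp a j = posUp a i + 1 ∧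
    posUp a j < 2 * (prank a / 2)

/-- `i` and `j` are consecutive downward-active vertices paired in forming `α̂`. -/
noncomputable def pairedDown {n : ℕ} (a : PElt n) (i j : Fin n) : Prop :=
  activeDown a i ∧ activeDown a j ∧ Even (posDown a i) ∧ posDown a j = posDown a i + 1 ∧
    posDown a j < 2 * (prank a / 2)

/-- The transversal relations removed in forming `α̂` (those of the first `2⌊r/2⌋`
transversals). -/
noncomputable def removedTrans {n : ℕ} (a : PElt n) (x y : PV n) : Prop :=
  ∃ i j : Fin n, a.r (.inl i) (.inr j) ∧ posDown a i < 2 * (prank a / 2) ∧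
    ((x = .inl i ∧ y = .inr j) ∨ (x = .inr j ∧ y = .inl i))

/-- The generating relation of `α̂`: the relations of `α` minus the removed transversals,
plus the new blocks pairing consecutive active vertices. -/
noncomputable def hatRel {n : ℕ} (a : PElt n) (x y : PV n) : Prop :=
  (a.r x y ∧ ¬ removedTrans a x y) ∨
  (∃ i j : Fin n, pairedUp a i j ∧
      ((x = .inr i ∧ y = .inr j) ∨ (x = .inr j ∧ y = .inr i))) ∨
  (∃ i j : Fin n, pairedDown a i j ∧
      ((x = .inl i ∧ y = .inl j) ∨ (x = .inl j ∧ y = .inl i)))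

/-- The element `α̂` obtained from `α` by pairing off consecutive active vertices. -/
noncomputable def hat {n : ℕ} (a : PElt n) : PElt n := EqvGen.setoid (hatRel a)

/-- The idempotents of a subset `S` (with respect to the partition product). -/
def Eset {n : ℕ} (S : Set (PElt n)) : Set (PElt n) := {a ∈ S | pmul a a = a}

/-- `D(S) = D₀ ∪ E(D₁)`: the idempotents of `S` of rank at most 1. -/
def Dset {n : ℕ} (S : Set (PElt n)) : Set (PElt n) :=
  {d ∈ S | pmul d d = d ∧ prank d ≤ 1}

/-- `θ` lies (entirely) to the left of the leftmost transversal of `a`. -/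
def LeftOfTrans {n : ℕ} (a : PElt n) (θ : Set (Fin n)) : Prop :=
  ∀ i ∈ θ, ∀ j : Fin n, activeDown a j ∨ activeUp a j → i < j

/-- `Θ(a)`: the cycle components of `Γ(a)` lying entirely to the left of the leftmost
transversal. -/
def ThetaSet {n : ℕ} (a : PElt n) : Set (Set (Fin n)) :=
  {θ | IsCycleComp a θ ∧ LeftOfTrans a θ}

/-! ### Returns, special pairs and `θ`-covers -/

/-- The block `{i,j}` of `a` on upper vertices is an upper return: no upper block
`{k,l}` has `k<i<j<l`, and no transversal contains an upper vertex smaller than `i`. -/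
def UpperReturn {n : ℕ} (a : PElt n) (i j : Fin n) : Prop :=
  i < j ∧ a.r (.inl i) (.inl j) ∧
  (¬ ∃ k l : Fin n, k < i ∧ j < l ∧ a.r (.inl k) (.inl l)) ∧
  (¬ ∃ k : Fin n, k < i ∧ activeDown a k)

/-- The block `{i′,j′}` of `a` on lower vertices is a lower return. -/
def LowerReturn {n : ℕ} (a : PElt n) (i j : Fin n) : Prop :=
  i < j ∧ a.r (.inr i) (.inr j) ∧
  (¬ ∃ k l : Fin n, k < i ∧ j < l ∧ a.r (.inr k) (.inr l)) ∧
  (¬ ∃ k : Fin n, k < i ∧ activeUp a k)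

/-- The interface-graph adjacency of `a` after deleting the lower-vertex block `{i′,j′}`
and the upper-vertex block `{k,l}`. -/
def redEdge {n : ℕ} (a : PElt n) (i j k l : Fin n) (u v : Fin n) : Prop :=
  (LowEdge a u v ∧ ({u, v} : Set (Fin n)) ≠ {k, l}) ∨
  (UpEdge a u v ∧ ({u, v} : Set (Fin n)) ≠ {i, j})

/-- The relation generating the `θ`-cover `a − (e′,f)`, for `e′ = {i′,j′}` and
`f = {k,l}`: delete the two blocks, and join each freed upper vertex to the freed lower
vertex reached along its path. -/
def coverRel {n : ℕ} (a : PElt n) (i j k l : Fin n) (x y : PV n) : Prop :=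
  (a.r x y ∧ ({x, y} : Set (PV n)) ≠ {.inl k, .inl l} ∧
    ({x, y} : Set (PV n)) ≠ {.inr i, .inr j}) ∨
  (∃ u v : Fin n, u ∈ ({k, l} : Set (Fin n)) ∧ v ∈ ({i, j} : Set (Fin n)) ∧
    EqvGen (redEdge a i j k l) u v ∧
    ((x = .inl u ∧ y = .inr v) ∨ (x = .inr v ∧ y = .inl u)))

/-- The `θ`-cover `a − (e′,f)` as a partition. -/
def coverElt {n : ℕ} (a : PElt n) (i j k l : Fin n) : PElt n :=
  EqvGen.setoid (coverRel a i j k l)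

/-- `b` is a `θ`-cover of `a`: `θ ∈ Θ(a)` and `b = a − (e′,f)` for some special pair
`(e′,f)` over `θ` (one lower-return and one upper-return edge of `θ`). -/
def IsThetaCover {n : ℕ} (a : PElt n) (θ : Set (Fin n)) (b : PElt n) : Prop :=
  θ ∈ ThetaSet a ∧
  ∃ i j k l : Fin n, i ∈ θ ∧ j ∈ θ ∧ k ∈ θ ∧ l ∈ θ ∧
    LowerReturn a i j ∧ UpperReturn a k l ∧ b = coverElt a i j k l

/-- `a ≪_d b`: `a = b` or there is a chain of `θ`-covers from `a` to `b` along pairwise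
distinct cycles `θ ∈ Θ(d)`. -/
def llRel {n : ℕ} (d : PElt n) (a b : PElt n) : Prop :=
  a = b ∨ ∃ (h : ℕ) (θs : Fin h → Set (Fin n)) (as : Fin (h + 1) → PElt n),
    Function.Injective θs ∧ (∀ ι, θs ι ∈ ThetaSet d) ∧
    as 0 = a ∧ as (Fin.last h) = b ∧
    ∀ ι : Fin h, IsThetaCover (as ι.castSucc) (θs ι) (as ι.succ)

/-- The fibre `F_d = {α ∈ E(S) : α̂ = d}`. -/
def Fib {n : ℕ} (S : Set (PElt n)) (d : PElt n) : Set (PElt n) :=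
  {a ∈ Eset S | hat a = d}

/-- `C_d(θ) = C*_d(θ) ∪ {d}`, where `C*_d(θ)` is the set of `θ`-covers of `d`. -/
def CoverSet {n : ℕ} (d : PElt n) (θ : Set (Fin n)) : Set (PElt n) :=
  insert d {b | IsThetaCover d θ b}

/-- `u_θ`: the number of upper-return blocks among the edges of `θ`. -/
noncomputable def uRet {n : ℕ} (a : PElt n) (θ : Set (Fin n)) : ℕ :=
  Nat.card {p : Fin n × Fin n // p.1 ∈ θ ∧ p.2 ∈ θ ∧ UpperReturn a p.1 p.2}

/-- `l_θ`: the number of lower-return blocks among the edges of `θ`. -/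
noncomputable def lRet {n : ℕ} (a : PElt n) (θ : Set (Fin n)) : ℕ :=
  Nat.card {p : Fin n × Fin n // p.1 ∈ θ ∧ p.2 ∈ θ ∧ LowerReturn a p.1 p.2}

/-! ### Twisted semigroup algebras -/

variable {K : Type} [Field K]

/-- The underlying vector space of the semigroup algebra `k[P_n]`. -/
abbrev PAlg (n : ℕ) (K : Type) [Field K] := PElt n →₀ K

/-- The twisted multiplication on `k[P_n]`: on basis elements,
`a ∘ b = ξ^{m(a,b)} · (ab)`, extended bilinearly. -/
noncomputable def twistMul {n : ℕ} (ξ : K) (f g : PAlg n K) : PAlg n K :=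
  f.sum fun a ca => g.sum fun b cb =>
    Finsupp.single (pmul a b) (ca * cb * ξ ^ floatCount a b)

/-- The twisted variant `S^ξ`: the subsemigroup of `(k[S], ∘)` generated by (the basis
elements corresponding to) `S`. -/
def TwistedVariant {n : ℕ} (ξ : K) (S : Set (PElt n)) : Set (PAlg n K) :=
  ⋂₀ {T : Set (PAlg n K) | (∀ a ∈ S, Finsupp.single a (1 : K) ∈ T) ∧
      ∀ f ∈ T, ∀ g ∈ T, twistMul ξ f g ∈ T}

/-- The idempotents of a set of elements of the twisted algebra. -/
def EsetTwist {n : ℕ} (ξ : K) (X : Set (PAlg n K)) : Set (PAlg n K) :=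
  {f ∈ X | twistMul ξ f f = f}

/-- `⟨S^ξ, ξ·1⟩ = {ξ^i·α : i ∈ ℕ, α ∈ S}`. -/
def TwistNat {n : ℕ} (ξ : K) (S : Set (PElt n)) : Set (PAlg n K) :=
  {f | ∃ (i : ℕ), ∃ a ∈ S, f = Finsupp.single a (ξ ^ i)}

/-- `⟨S^ξ, ξ·1, ξ⁻¹·1⟩ = {ξ^i·α : i ∈ ℤ, α ∈ S}`. -/
def TwistInt {n : ℕ} (ξ : K) (S : Set (PElt n)) : Set (PAlg n K) :=
  {f | ∃ (i : ℤ), ∃ a ∈ S, f = Finsupp.single a (ξ ^ i)}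

/-! ### Idempotent statistics of the Jones monoid -/

/-- The number of cycle components of `Γ(a)`. -/
noncomputable def numCycles {n : ℕ} (a : PElt n) : ℕ :=
  Nat.card {θ : Set (Fin n) // IsCycleComp a θ}

/-- The number of path components of `Γ(a)`. -/
noncomputable def numPaths {n : ℕ} (a : PElt n) : ℕ :=
  Nat.card {θ : Set (Fin n) // IsPathComp a θ}

/-- `E_{n;c,p}`: the idempotents of the Jones monoid `J_n` with `c` cycle components and
`p` path components (out-of-range indices give the empty set). -/
def EJcp (n : ℕ) (c p : ℤ) : Set (PElt n) :=
  {a ∈ Jones n | pmul a a = a ∧ (numCycles a : ℤ) = c ∧ (numPaths a : ℤ) = p}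

/-- `e_{n;c,p} = |E_{n;c,p}|`. -/
noncomputable def eJ (n : ℕ) (c p : ℤ) : ℕ := Nat.card (EJcp n c p)

/-- `e_{n;·,p} = Σ_c e_{n;c,p}`: the number of idempotents of `J_n` of rank `p`. -/
noncomputable def eJdot (n : ℕ) (p : ℤ) : ℕ :=
  Nat.card {a : PElt n | a ∈ Jones n ∧ pmul a a = a ∧ (numPaths a : ℤ) = p}

/-- `S^{(1)}_{n;c,p} = Σ_{α ∈ E_{n;c,p}} Σ_{θ ∈ Θ(α)} (u_θ + l_θ)`. -/
noncomputable def S1 (n : ℕ) (c p : ℤ) : ℕ :=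
  ∑ᶠ a ∈ EJcp n c p, ∑ᶠ θ ∈ ThetaSet a, (uRet a θ + lRet a θ)

/-- `S^{(2)}_{n;c,p} = Σ_{α ∈ E_{n;c,p}} Σ_{θ₁ ≠ θ₂ ∈ Θ(α)} u_{θ₁}·l_{θ₂}`
(the inner sum over ordered pairs of distinct cycles). -/
noncomputable def S2 (n : ℕ) (c p : ℤ) : ℕ :=
  ∑ᶠ a ∈ EJcp n c p, ∑ᶠ q ∈ {q : Set (Fin n) × Set (Fin n) |
      q.1 ∈ ThetaSet a ∧ q.2 ∈ ThetaSet a ∧ q.1 ≠ q.2}, uRet a q.1 * lRet a q.2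

/-- `S^{(1)}_{n;·,p}`. -/
noncomputable def S1dot (n : ℕ) (p : ℤ) : ℕ :=
  ∑ᶠ a ∈ {a : PElt n | a ∈ Jones n ∧ pmul a a = a ∧ (numPaths a : ℤ) = p},
    ∑ᶠ θ ∈ ThetaSet a, (uRet a θ + lRet a θ)

/-- `S^{(2)}_{n;·,p}`. -/
noncomputable def S2dot (n : ℕ) (p : ℤ) : ℕ :=
  ∑ᶠ a ∈ {a : PElt n | a ∈ Jones n ∧ pmul a a = a ∧ (numPaths a : ℤ) = p},
    ∑ᶠ q ∈ {q : Set (Fin n) × Set (Fin n) |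
      q.1 ∈ ThetaSet a ∧ q.2 ∈ ThetaSet a ∧ q.1 ≠ q.2}, uRet a q.1 * lRet a q.2

/-- Label of an upper/lower vertex: position among the transversals, or the special value `s`. -/
def lab (i s u : ℕ) : ℕ := if u < i then u else if u ≤ i + 1 then s else u - 2

/-- Label of a vertex of the partition `A i k`. -/
def labV (n i k : ℕ) : PV n → ℕ
  | .inl u => lab i n u.val
  | .inr v => lab k (n + 1) v.val

/-- The partition with upper hook `{i, i+1}`, lower hook `{k, k+1}`, all else transversal. -/
def hook (n i k : ℕ) : PElt n := Setoid.ker (labV n i k)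

/-- Label of a middle vertex. -/
def midLab (n i k v : ℕ) : ℕ :=
  if v < min i k then v else if v ≤ max i k + 1 then (if i = k then n + 2 else min i k) else v - 2

/-- Label on three layers. -/
def labT (n i k : ℕ) : TV n → ℕ
  | .inl u => lab i n u.val
  | .inr (.inl v) => midLab n i k v.val
  | .inr (.inr w) => lab k (n + 1) w.val

/-- All blocks have size exactly two. -/
def TwoBlocks {n : ℕ} (a : PElt n) : Prop :=
  ∀ x, ∃ p, p ≠ x ∧ ∀ y, a.r x y ↔ (y = x ∨ y = p)

theorem blockCard_iff {n : ℕ} (a : PElt n) (x : PV n) :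
    blockCard a x = 2 ↔ ∃ p, p ≠ x ∧ ∀ y, a.r x y ↔ (y = x ∨ y = p) := by
  unfold blockCard
  rw [Nat.card_eq_two_iff' (⟨x, a.refl' x⟩ : {y : PV n // a.r x y})]
  constructor
  · rintro ⟨⟨p, hp⟩, hne, hu⟩
    refine ⟨p, fun h => hne (Subtype.ext h), fun y => ⟨fun h => ?_, ?_⟩⟩
    · by_cases hy : y = x
      · exact Or.inl hy
      · right
        have := hu ⟨y, h⟩ (fun h' => hy (congrArg Subtype.val h'))
        exact congrArg Subtype.val this
    · rintro (rfl | rfl)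
      · exact a.refl' _
      · exact hp
  · rintro ⟨p, hne, hu⟩
    refine ⟨⟨p, (hu p).2 (Or.inr rfl)⟩, fun h => hne (congrArg Subtype.val h), ?_⟩
    rintro ⟨y, hy⟩ hyx
    apply Subtype.ext
    rcases (hu y).1 hy with h | h
    · exact absurd (Subtype.ext h) hyx
    · exact h

theorem jones_iff {n : ℕ} (a : PElt n) : a ∈ Jones n ↔ IsPlanar a ∧ TwoBlocks a := by
  unfold Jones TwoBlocks
  simp only [Set.mem_setOf_eq, blockCard_iff]

theorem TwoBlocks.three {n : ℕ} {a : PElt n} (h : TwoBlocks a) {x y z : PV n}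
    (hy : a.r x y) (hz : a.r x z) (hxy : y ≠ x) (hxz : z ≠ x) : y = z := by
  obtain ⟨p, -, hp⟩ := h x
  rcases (hp y).1 hy with h1 | h1
  · exact absurd h1 hxy
  rcases (hp z).1 hz with h2 | h2
  · exact absurd h2 hxz
  rw [h1, h2]

theorem TwoBlocks.eq_of_le {n : ℕ} {a b : PElt n} (ha : TwoBlocks a) (hb : TwoBlocks b)
    (h : ∀ x y, a.r x y → b.r x y) : a = b := by
  apply Setoid.ext
  intro x y
  refine ⟨h x y, fun hxy => ?_⟩
  by_cases hyx : y = x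
  · subst hyx; exact a.refl' _
  obtain ⟨p, hpx, hp⟩ := ha x
  have h1 : a.r x p := (hp p).2 (Or.inr rfl)
  have := hb.three (h _ _ h1) hxy hpx hyx
  rw [← this]; exact h1

theorem hook_r {n i k : ℕ} (x y : PV n) : (hook n i k).r x y ↔ labV n i k x = labV n i k y := Iff.rfl

theorem hook_two {n i k : ℕ} (hi : i + 1 < n) (hk : k + 1 < n) : TwoBlocks (hook n i k) := by
  rintro (⟨u, hu⟩ | ⟨u, hu⟩)
  · by_cases h1 : u = i
    · refine ⟨.inl ⟨i + 1, hi⟩, by simp; omega, ?_⟩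
      rintro (⟨v, hv⟩ | ⟨v, hv⟩) <;> simp [hook_r, labV, lab] <;> split_ifs <;> omega
    by_cases h2 : u = i + 1
    · refine ⟨.inl ⟨i, by omega⟩, by simp; omega, ?_⟩
      rintro (⟨v, hv⟩ | ⟨v, hv⟩) <;> simp [hook_r, labV, lab] <;> split_ifs <;> omega
    refine ⟨.inr ⟨if lab i n u < k then lab i n u else lab i n u + 2, ?_⟩, by simp, ?_⟩
    · unfold lab; split_ifs <;> omega
    rintro (⟨v, hv⟩ | ⟨v, hv⟩) <;> simp [hook_r, labV, lab] <;> split_ifs <;> omega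
  · by_cases h1 : u = k
    · refine ⟨.inr ⟨k + 1, hk⟩, by simp; omega, ?_⟩
      rintro (⟨v, hv⟩ | ⟨v, hv⟩) <;> simp [hook_r, labV, lab] <;> split_ifs <;> omega
    by_cases h2 : u = k + 1
    · refine ⟨.inr ⟨k, by omega⟩, by simp; omega, ?_⟩
      rintro (⟨v, hv⟩ | ⟨v, hv⟩) <;> simp [hook_r, labV, lab] <;> split_ifs <;> omega
    refine ⟨.inl ⟨if lab k n u < i then lab k n u else lab k n u + 2, ?_⟩, by simp, ?_⟩
    · unfold lab; split_ifs <;> omega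
    rintro (⟨v, hv⟩ | ⟨v, hv⟩) <;> simp [hook_r, labV, lab] <;> split_ifs <;> omega

theorem hook_pair {n i k : ℕ} (hi : i + 1 < n) (hk : k + 1 < n) (x y : PV n)
    (h : (hook n i k).r x y) (hlt : ordIdx n x < ordIdx n y) :
    (ordIdx n x = i ∧ ordIdx n y = i + 1) ∨
    (ordIdx n x = 2 * n - 1 - (k + 1) ∧ ordIdx n y = 2 * n - 1 - k) ∨
    (∃ u v : Fin n, x = .inl u ∧ y = .inr v) := by
  rw [hook_r] at h
  rcases x with ⟨u, hu⟩ | ⟨u, hu⟩ <;> rcases y with ⟨v, hv⟩ | ⟨v, hv⟩ <;>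
    simp [labV, lab, ordIdx] at h hlt ⊢ <;> (try split_ifs at h) <;> omega

theorem hook_planar {n i k : ℕ} (hi : i + 1 < n) (hk : k + 1 < n) : IsPlanar (hook n i k) := by
  rintro ⟨w, x, y, z, h1, h2, h3, hwy, hxz, -⟩
  rcases hook_pair hi hk w y hwy (by omega) with h | h | ⟨u, v, rfl, rfl⟩
  · omega
  · omega
  rcases hook_pair hi hk x z hxz (by omega) with h | h | ⟨u', v', rfl, rfl⟩
  · omega
  · omega
  rw [hook_r] at hwy hxz
  obtain ⟨u, hu⟩ := u
  obtain ⟨v, hv⟩ := v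
  obtain ⟨u', hu'⟩ := u'
  obtain ⟨v', hv'⟩ := v'
  simp only [labV, lab, ordIdx] at *
  split_ifs at hwy hxz <;> omega

theorem hook_inj {n i k i' k' : ℕ} (hi : i + 1 < n) (hk : k + 1 < n)
    (h : hook n i k = hook n i' k') : i = i' ∧ k = k' := by
  have h1 : (hook n i k).r (.inl ⟨i, by omega⟩) (.inl ⟨i + 1, hi⟩) := by
    rw [hook_r]; simp [labV, lab]
  have h2 : (hook n i k).r (.inr ⟨k, by omega⟩) (.inr ⟨k + 1, hk⟩) := by
    rw [hook_r]; simp [labV, lab]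
  rw [h, hook_r] at h1 h2
  simp only [labV, lab] at h1 h2
  constructor
  · split_ifs at h1 <;> omega
  · split_ifs at h2 <;> omega

theorem lab_stack {n i k : ℕ} (hi : i + 1 < n) (hk : k + 1 < n) (hik : i ≤ k + 1) (hki : k ≤ i + 1)
    (x y : TV n) (h : stackRel (hook n i k) (hook n i k) x y) : labT n i k x = labT n i k y := by
  rcases h with ⟨p, q, h, rfl, rfl⟩ | ⟨p, q, h, rfl, rfl⟩ <;> rw [hook_r] at h <;>
  rcases p with ⟨u, hu⟩ | ⟨u, hu⟩ <;> rcases q with ⟨v, hv⟩ | ⟨v, hv⟩ <;>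
  rcases (show i = k ∨ i = k + 1 ∨ k = i + 1 by omega) with rfl | rfl | rfl <;>
  simp [labV, lab, labT, midLab, upEmb, downEmb] at h ⊢ <;> grind

theorem lab_stackSetoid {n i k : ℕ} (hi : i + 1 < n) (hk : k + 1 < n) (hik : i ≤ k + 1)
    (hki : k ≤ i + 1) (x y : TV n) (h : (stackSetoid (hook n i k) (hook n i k)).r x y) :
    labT n i k x = labT n i k y := by
  change EqvGen _ x y at h
  induction h with
  | rel x y h => exact lab_stack hi hk hik hki x y h
  | refl x => rfl
  | symm x y _ ih => exact ih.symm
  | trans x y z _ _ h1 h2 => exact h1.trans h2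

theorem st_up {n : ℕ} {a b : PElt n} {p q : PV n} (h : a.r p q) :
    (stackSetoid a b) (upEmb p) (upEmb q) :=
  EqvGen.rel _ _ (Or.inl ⟨p, q, h, rfl, rfl⟩)

theorem st_down {n : ℕ} {a b : PElt n} {p q : PV n} (h : b.r p q) :
    (stackSetoid a b) (downEmb p) (downEmb q) :=
  EqvGen.rel _ _ (Or.inr ⟨p, q, h, rfl, rfl⟩)

theorem hook_trans {n i k : ℕ} (hi : i + 1 < n) (hk : k + 1 < n) (hik : i ≤ k + 1)
    (hki : k ≤ i + 1) (u v : Fin n) (h : (hook n i k).r (.inl u) (.inr v)) :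
    (stackSetoid (hook n i k) (hook n i k)) (.inl u) (.inr (.inr v)) := by
  have h1 : (stackSetoid (hook n i k) (hook n i k)) (.inl u) (.inr (.inl v)) := st_up h
  by_cases hv : (hook n i k).r (.inl v) (.inr v)
  · exact Setoid.trans' _ h1 (st_down hv)
  rw [hook_r] at h hv
  obtain ⟨u, hu⟩ := u
  obtain ⟨v, hv'⟩ := v
  rcases (show i = k ∨ i = k + 1 ∨ k = i + 1 by omega) with rfl | rfl | rfl
  · exfalso
    simp [labV, lab] at h hv
    grind
  · have e : v = k + 2 := by
      simp [labV, lab] at h hv; grind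
    subst e
    have h2 : (stackSetoid (hook n (k+1) k) (hook n (k+1) k)) (.inr (.inl ⟨k + 2, hv'⟩))
      (.inr (.inl ⟨k + 1, hk⟩)) := st_down (p := .inl ⟨k + 2, hv'⟩) (q := .inl ⟨k + 1, hk⟩)
        (by rw [hook_r]; simp [labV, lab])
    have h3 : (stackSetoid (hook n (k+1) k) (hook n (k+1) k)) (.inr (.inl ⟨k + 1, hk⟩))
      (.inr (.inl ⟨k, by omega⟩)) := st_up (p := .inr ⟨k + 1, hk⟩) (q := .inr ⟨k, by omega⟩)
        (by rw [hook_r]; simp [labV, lab])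
    have h4 : (stackSetoid (hook n (k+1) k) (hook n (k+1) k)) (.inr (.inl ⟨k, by omega⟩))
      (.inr (.inr ⟨k + 2, hv'⟩)) := st_down (p := .inl ⟨k, by omega⟩) (q := .inr ⟨k + 2, hv'⟩)
        (by rw [hook_r]; simp [labV, lab])
    exact Setoid.trans' _ h1 (Setoid.trans' _ h2 (Setoid.trans' _ h3 h4))
  · have e : v = i := by
      simp [labV, lab] at h hv; grind
    subst e
    have h2 : (stackSetoid (hook n v (v+1)) (hook n v (v+1))) (.inr (.inl ⟨v, hv'⟩))
      (.inr (.inl ⟨v + 1, hi⟩)) := st_down (p := .inl ⟨v, hv'⟩) (q := .inl ⟨v + 1, hi⟩)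
        (by rw [hook_r]; simp [labV, lab])
    have h3 : (stackSetoid (hook n v (v+1)) (hook n v (v+1))) (.inr (.inl ⟨v + 1, hi⟩))
      (.inr (.inl ⟨v + 2, hk⟩)) := st_up (p := .inr ⟨v + 1, hi⟩) (q := .inr ⟨v + 2, hk⟩)
        (by rw [hook_r]; simp [labV, lab])
    have h4 : (stackSetoid (hook n v (v+1)) (hook n v (v+1))) (.inr (.inl ⟨v + 2, hk⟩))
      (.inr (.inr ⟨v, hv'⟩)) := st_down (p := .inl ⟨v + 2, hk⟩) (q := .inr ⟨v, hv'⟩)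
        (by rw [hook_r]; simp [labV, lab])
    exact Setoid.trans' _ h1 (Setoid.trans' _ h2 (Setoid.trans' _ h3 h4))

theorem hook_idem {n i k : ℕ} (hi : i + 1 < n) (hk : k + 1 < n) (hik : i ≤ k + 1)
    (hki : k ≤ i + 1) : pmul (hook n i k) (hook n i k) = hook n i k := by
  apply Setoid.ext
  intro x y
  change (stackSetoid (hook n i k) (hook n i k)) (outEmb x) (outEmb y) ↔ _
  constructor
  · intro h
    have := lab_stackSetoid hi hk hik hki _ _ h
    rcases x with x | x <;> rcases y with y | y <;> exact this
  · intro h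
    rcases x with x | x <;> rcases y with y | y
    · exact st_up h
    · exact hook_trans hi hk hik hki _ _ h
    · exact Setoid.symm' _ (hook_trans hi hk hik hki _ _ (Setoid.symm' _ h))
    · exact st_down h

theorem hook_not_idem {n i k : ℕ} (hi : i + 1 < n) (hk : k + 1 < n)
    (h : pmul (hook n i k) (hook n i k) = hook n i k) : i ≤ k + 1 ∧ k ≤ i + 1 := by
  have hh : ∀ x y, (stackSetoid (hook n i k) (hook n i k)) (outEmb x) (outEmb y) →
      labV n i k x = labV n i k y := by
    intro x y hxy
    have : (pmul (hook n i k) (hook n i k)).r x y := hxy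
    rw [h] at this
    exact this
  constructor
  · by_contra hc
    have h1 : (stackSetoid (hook n i k) (hook n i k)) (.inr (.inr ⟨k + 2, by omega⟩))
      (.inr (.inl ⟨k, by omega⟩)) := st_down (p := .inr ⟨k + 2, by omega⟩) (q := .inl ⟨k, by omega⟩)
        (by rw [hook_r]; simp [labV, lab]; grind)
    have h2 : (stackSetoid (hook n i k) (hook n i k)) (.inr (.inl ⟨k, by omega⟩))
      (.inr (.inl ⟨k + 1, by omega⟩)) := st_up (p := .inr ⟨k, by omega⟩) (q := .inr ⟨k + 1, by omega⟩)
        (by rw [hook_r]; simp [labV, lab])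
    have h3 : (stackSetoid (hook n i k) (hook n i k)) (.inr (.inl ⟨k + 1, by omega⟩))
      (.inr (.inr ⟨k + 3, by omega⟩)) := st_down (p := .inl ⟨k + 1, by omega⟩)
        (q := .inr ⟨k + 3, by omega⟩) (by rw [hook_r]; simp [labV, lab]; grind)
    have := hh (.inr ⟨k + 2, by omega⟩) (.inr ⟨k + 3, by omega⟩)
      (Setoid.trans' _ h1 (Setoid.trans' _ h2 h3))
    simp [labV, lab] at this
  · by_contra hc
    have h1 : (stackSetoid (hook n i k) (hook n i k)) (.inl ⟨i + 2, by omega⟩)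
      (.inr (.inl ⟨i, by omega⟩)) := st_up (p := .inl ⟨i + 2, by omega⟩) (q := .inr ⟨i, by omega⟩)
        (by rw [hook_r]; simp [labV, lab]; grind)
    have h2 : (stackSetoid (hook n i k) (hook n i k)) (.inr (.inl ⟨i, by omega⟩))
      (.inr (.inl ⟨i + 1, by omega⟩)) := st_down (p := .inl ⟨i, by omega⟩) (q := .inl ⟨i + 1, by omega⟩)
        (by rw [hook_r]; simp [labV, lab])
    have h3 : (stackSetoid (hook n i k) (hook n i k)) (.inr (.inl ⟨i + 1, by omega⟩))
      (.inl ⟨i + 3, by omega⟩) := st_up (p := .inr ⟨i + 1, by omega⟩)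
        (q := .inl ⟨i + 3, by omega⟩) (by rw [hook_r]; simp [labV, lab]; grind)
    have := hh (.inl ⟨i + 2, by omega⟩) (.inl ⟨i + 3, by omega⟩)
      (Setoid.trans' _ h1 (Setoid.trans' _ h2 h3))
    simp [labV, lab] at this

theorem edge_mem {n : ℕ} {a : PElt n} {θ : Set (Fin n)} (hθ : IsComp a θ) {u v : Fin n}
    (hu : u ∈ θ) (h : a.r (.inl u) (.inl v) ∨ a.r (.inr u) (.inr v)) : v ∈ θ := by
  by_cases huv : u = v
  · rwa [← huv]
  refine (hθ.2 u hu v).1 (EqvGen.rel _ _ ?_)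
  rcases h with h | h
  · exact Or.inl ⟨huv, h⟩
  · exact Or.inr ⟨huv, h⟩

theorem not_hasLow {n : ℕ} {a : PElt n} (h2 : TwoBlocks a) (u : Fin n) :
    ¬ hasLow a u ↔ ∃ v, a.r (.inl u) (.inr v) := by
  obtain ⟨p, hp, hh⟩ := h2 (.inl u)
  constructor
  · intro h
    rcases p with v | v
    · exact absurd ⟨v, fun e => hp (by rw [e]), (hh _).2 (Or.inr rfl)⟩ h
    · exact ⟨v, (hh _).2 (Or.inr rfl)⟩
  · rintro ⟨v, hv⟩ ⟨w, hne, hw⟩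
    have := h2.three hv hw (by simp) (by simpa using hne.symm)
    simp at this

theorem not_hasUp {n : ℕ} {a : PElt n} (h2 : TwoBlocks a) (u : Fin n) :
    ¬ hasUp a u ↔ ∃ v, a.r (.inl v) (.inr u) := by
  obtain ⟨p, hp, hh⟩ := h2 (.inr u)
  constructor
  · intro h
    rcases p with v | v
    · exact ⟨v, a.symm' ((hh _).2 (Or.inr rfl))⟩
    · exact absurd ⟨v, fun e => hp (by rw [e]), (hh _).2 (Or.inr rfl)⟩ h
  · rintro ⟨v, hv⟩ ⟨w, hne, hw⟩
    have := h2.three (a.symm' hv) hw (by simp) (by simpa using hne.symm)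
    simp at this

theorem stack_inv {n : ℕ} {a b : PElt n} (S : TV n → Prop)
    (hS : ∀ x y, stackRel a b x y → S x → S y) {x y : TV n}
    (h : (stackSetoid a b).r x y) : S x ↔ S y := by
  change EqvGen _ x y at h
  induction h with
  | rel x y h =>
    refine ⟨hS x y h, hS y x ?_⟩
    rcases h with ⟨p, q, h, rfl, rfl⟩ | ⟨p, q, h, rfl, rfl⟩
    · exact Or.inl ⟨q, p, a.symm' h, rfl, rfl⟩
    · exact Or.inr ⟨q, p, b.symm' h, rfl, rfl⟩
  | refl x => rfl
  | symm x y _ ih => exact ih.symm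
  | trans x y z _ _ h1 h2 => exact h1.trans h2

/-- Invariant set for a component with all low edges. -/
def invTop {n : ℕ} (a : PElt n) (θ : Set (Fin n)) : TV n → Prop
  | .inl u => ∃ v ∈ θ, a.r (.inl u) (.inr v)
  | .inr (.inl v) => v ∈ θ
  | .inr (.inr _) => False

/-- Invariant set for a component with all up edges. -/
def invBot {n : ℕ} (a : PElt n) (θ : Set (Fin n)) : TV n → Prop
  | .inl _ => False
  | .inr (.inl v) => v ∈ θ
  | .inr (.inr u) => ∃ v ∈ θ, a.r (.inl v) (.inr u)

theorem exists_not_hasLow {n : ℕ} {a : PElt n} (h2 : TwoBlocks a) (hid : pmul a a = a)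
    {θ : Set (Fin n)} (hθ : IsPathComp a θ) : ∃ i ∈ θ, ¬ hasLow a i := by
  by_contra hc
  push Not at hc
  obtain ⟨hcomp, i, hi, hor⟩ := hθ
  have hup : ¬ hasUp a i := hor.resolve_left (fun h => h (hc i hi))
  obtain ⟨j, hj⟩ := (not_hasUp h2 i).1 hup
  have hst : (stackSetoid a a).r (.inl j) (.inr (.inr i)) := by
    have : (pmul a a).r (.inl j) (.inr i) := by rw [hid]; exact hj
    exact this
  have key := stack_inv (invTop a θ) ?_ hst
  · exact key.1 ⟨i, hi, hj⟩
  rintro x y (⟨p, q, h, rfl, rfl⟩ | ⟨p, q, h, rfl, rfl⟩) hx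
  · rcases p with u | u <;> rcases q with v | v
    · obtain ⟨w, hw, hr⟩ := hx
      exact ⟨w, hw, a.trans' (a.symm' h) hr⟩
    · obtain ⟨w, hw, hr⟩ := hx
      exact edge_mem hcomp hw (Or.inr (a.trans' (a.symm' hr) h))
    · exact ⟨u, hx, a.symm' h⟩
    · exact edge_mem hcomp hx (Or.inr h)
  · rcases p with u | u <;> rcases q with v | v
    · exact edge_mem hcomp hx (Or.inl h)
    · exact (not_hasLow h2 u).2 ⟨v, h⟩ (hc u hx)
    · exact hx.elim
    · exact hx.elim

theorem exists_not_hasUp {n : ℕ} {a : PElt n} (h2 : TwoBlocks a) (hid : pmul a a = a)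
    {θ : Set (Fin n)} (hθ : IsPathComp a θ) : ∃ i ∈ θ, ¬ hasUp a i := by
  by_contra hc
  push Not at hc
  obtain ⟨hcomp, i, hi, hor⟩ := hθ
  have hup : ¬ hasLow a i := hor.resolve_right (fun h => h (hc i hi))
  obtain ⟨j, hj⟩ := (not_hasLow h2 i).1 hup
  have hst : (stackSetoid a a).r (.inl i) (.inr (.inr j)) := by
    have : (pmul a a).r (.inl i) (.inr j) := by rw [hid]; exact hj
    exact this
  have key := stack_inv (invBot a θ) ?_ hst
  · exact key.2 ⟨i, hi, hj⟩
  rintro x y (⟨p, q, h, rfl, rfl⟩ | ⟨p, q, h, rfl, rfl⟩) hx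
  · rcases p with u | u <;> rcases q with v | v
    · exact hx.elim
    · exact hx.elim
    · exact (not_hasUp h2 u).2 ⟨v, a.symm' h⟩ (hc u hx)
    · exact edge_mem hcomp hx (Or.inr h)
  · rcases p with u | u <;> rcases q with v | v
    · exact edge_mem hcomp hx (Or.inl h)
    · exact ⟨u, hx, h⟩
    · obtain ⟨w, hw, hr⟩ := hx
      exact edge_mem hcomp hw (Or.inl (a.trans' hr h))
    · obtain ⟨w, hw, hr⟩ := hx
      exact ⟨w, hw, a.trans' hr h⟩

theorem comp_isComp {n : ℕ} (a : PElt n) (u : Fin n) : IsComp a {v | gconn a u v} := by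
  refine ⟨⟨u, EqvGen.refl u⟩, fun i hi j => ⟨fun h => EqvGen.trans _ _ _ hi h,
    fun h => EqvGen.trans _ _ _ (EqvGen.symm _ _ hi) h⟩⟩

theorem isComp_eq {n : ℕ} {a : PElt n} {θ : Set (Fin n)} (h : IsComp a θ) {u : Fin n}
    (hu : u ∈ θ) : {v | gconn a u v} = θ := by
  ext v
  exact h.2 u hu v

/-- The component of a vertex satisfying `P`, where `P` forces a free side. -/
def toComp {n : ℕ} (a : PElt n) (P : Fin n → Prop)
    (hP : ∀ u, P u → ¬ hasLow a u ∨ ¬ hasUp a u) (u : {u // P u}) :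
    {θ : Set (Fin n) // IsPathComp a θ} :=
  ⟨{v | gconn a u.1 v}, comp_isComp a u.1, u.1, EqvGen.refl _, hP u.1 u.2⟩

theorem toComp_surj {n : ℕ} (a : PElt n) (P : Fin n → Prop)
    (hP : ∀ u, P u → ¬ hasLow a u ∨ ¬ hasUp a u)
    (hs : ∀ θ, IsPathComp a θ → ∃ u ∈ θ, P u) : Function.Surjective (toComp a P hP) := by
  rintro ⟨θ, hθ⟩
  obtain ⟨u, hu, hPu⟩ := hs θ hθ
  exact ⟨⟨u, hPu⟩, Subtype.ext (isComp_eq hθ.1 hu)⟩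

theorem toComp_inj {n : ℕ} (a : PElt n) (P : Fin n → Prop)
    (hP : ∀ u, P u → ¬ hasLow a u ∨ ¬ hasUp a u)
    (hs : ∀ u v, P u → P v → gconn a u v → u = v) : Function.Injective (toComp a P hP) := by
  rintro ⟨u, hu⟩ ⟨v, hv⟩ h
  have h1 : {w | gconn a u w} = {w | gconn a v w} := congrArg Subtype.val h
  have h2 : v ∈ {w | gconn a u w} := by rw [h1]; exact EqvGen.refl v
  exact Subtype.ext (hs u v hu hv h2)

theorem gconn_mid {n i k : ℕ} (hi : i + 1 < n) (hk : k + 1 < n) (hik : i ≤ k + 1)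
    (hki : k ≤ i + 1) {u v : Fin n} (h : gconn (hook n i k) u v) :
    midLab n i k u = midLab n i k v := by
  have : (stackSetoid (hook n i k) (hook n i k)).r (.inr (.inl u)) (.inr (.inl v)) := by
    induction h with
    | rel x y h =>
      rcases h with ⟨_, h⟩ | ⟨_, h⟩
      · exact st_down h
      · exact st_up h
    | refl x => exact Setoid.refl' _ _
    | symm x y _ ih => exact Setoid.symm' _ ih
    | trans x y z _ _ h1 h2 => exact Setoid.trans' _ h1 h2
  exact lab_stackSetoid hi hk hik hki _ _ this

theorem hook_hasLow {n i k : ℕ} (hi : i + 1 < n) (u : Fin n) :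
    hasLow (hook n i k) u ↔ u.val = i ∨ u.val = i + 1 := by
  obtain ⟨u, hu⟩ := u
  constructor
  · rintro ⟨⟨v, hv⟩, hne, h⟩
    rw [hook_r] at h
    simp [labV, lab] at h hne ⊢
    grind
  · rintro (h | h)
    · exact ⟨⟨i + 1, hi⟩, by simp at h ⊢; omega, by rw [hook_r]; simp [labV, lab] at h ⊢; grind⟩
    · exact ⟨⟨i, by omega⟩, by simp at h ⊢; omega, by rw [hook_r]; simp [labV, lab] at h ⊢; grind⟩

theorem hook_numPaths {n i k : ℕ} (hi : i + 1 < n) (hk : k + 1 < n) (hik : i ≤ k + 1)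
    (hki : k ≤ i + 1) : numPaths (hook n i k) = n - 2 := by
  have h2 := hook_two hi hk
  have hb : Function.Bijective (toComp (hook n i k) (fun u => ¬ hasLow (hook n i k) u)
      (fun u h => Or.inl h)) := by
    refine ⟨toComp_inj _ _ _ ?_, toComp_surj _ _ _ ?_⟩
    · intro u v hu hv h
      have := gconn_mid hi hk hik hki h
      rw [hook_hasLow hi] at hu hv
      apply Fin.ext
      rcases (show i = k ∨ i = k + 1 ∨ k = i + 1 by omega) with rfl | rfl | rfl <;>
        simp [midLab] at this <;> grind
    · intro θ hθ
      exact exists_not_hasLow h2 (hook_idem hi hk hik hki) hθ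
  unfold numPaths
  rw [← Nat.card_congr (Equiv.ofBijective _ hb)]
  have : {u : Fin n | ¬ hasLow (hook n i k) u} =
      ((({⟨i, by omega⟩, ⟨i + 1, hi⟩} : Finset (Fin n))ᶜ : Finset (Fin n)) : Set (Fin n)) := by
    ext u
    simp [hook_hasLow hi, Fin.ext_iff]
    tauto
  change Nat.card {u : Fin n | ¬ hasLow (hook n i k) u} = _
  rw [this, Nat.card_coe_set_eq, Set.ncard_coe_finset, Finset.card_compl, Finset.card_pair (by simp)]
  simp

theorem exists_pair {n : ℕ} {Q : Fin n → Prop} (R : Fin n → Fin n → Prop) (hR : ∀ u v, R u v → R v u)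
    (hQ : ∀ u, Q u ↔ ∃ v, u ≠ v ∧ R u v)
    (hc : n ≤ Nat.card {u // ¬ Q u} + 2) (hex : ∃ u, Q u) :
    ∃ p q, p < q ∧ R p q ∧ ∀ u, Q u ↔ u = p ∨ u = q := by
  classical
  obtain ⟨u, hu⟩ := hex
  obtain ⟨v, huv, hr⟩ := (hQ u).1 hu
  have hv : Q v := (hQ v).2 ⟨u, huv.symm, hR _ _ hr⟩
  have hsub : ∀ w, Q w → w = u ∨ w = v := by
    intro w hw
    by_contra hc'
    push Not at hc'
    have h1 : Nat.card {u // ¬ Q u} = (Finset.univ.filter (fun u => ¬ Q u)).card := by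
      rw [Nat.card_eq_fintype_card, Fintype.card_subtype]
    have h3 : ({w, u, v} : Finset (Fin n)).card = 3 := by
      rw [Finset.card_insert_of_notMem, Finset.card_pair huv]
      simp; exact hc'
    have h4 : Finset.univ.filter (fun u => ¬ Q u) ⊆ ({w, u, v} : Finset (Fin n))ᶜ := by
      intro x hx
      simp at hx ⊢
      refine ⟨?_, ?_, ?_⟩ <;> rintro rfl <;> contradiction
    have h5 := Finset.card_le_card h4
    have h6 := Finset.card_le_univ ({w, u, v} : Finset (Fin n))
    rw [Finset.card_compl, h3] at h5
    rw [h3] at h6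
    simp at h5 h6
    omega
  rcases lt_or_gt_of_ne huv with h | h
  · exact ⟨u, v, h, hr, fun w => ⟨hsub w, by rintro (rfl | rfl) <;> assumption⟩⟩
  · exact ⟨v, u, h, hR _ _ hr, fun w => ⟨fun hw => (hsub w hw).symm, by rintro (rfl | rfl) <;> assumption⟩⟩

theorem no_edges {n : ℕ} {a : PElt n} (hl : ∀ u, ¬ hasLow a u) (hu : ∀ u, ¬ hasUp a u) :
    n ≤ numPaths a := by
  have := Nat.card_le_card_of_injective (toComp a (fun _ => True) (fun u _ => Or.inl (hl u)))
    (toComp_inj _ _ _ (by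
      intro u v _ _ h
      induction h with
      | rel x y h =>
        rcases h with h | h
        · exact absurd ⟨y, h⟩ (hl x)
        · exact absurd ⟨y, h⟩ (hu x)
      | refl x => rfl
      | symm x y _ ih => exact ih.symm
      | trans x y z _ _ h1 h2 => exact h1.trans h2))
  simpa [numPaths] using this

theorem low_of_up {n : ℕ} {a : PElt n} (h2 : TwoBlocks a) (hl : ∀ u, ¬ hasLow a u) :
    ∀ u, ¬ hasUp a u := by
  choose τ hτ using fun u => (not_hasLow h2 u).1 (hl u)
  have hinj : Function.Injective τ := by
    intro u v h
    have h1 := hτ u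
    rw [h] at h1
    by_contra hne
    exact hl u ⟨v, hne, a.trans' h1 (a.symm' (hτ v))⟩
  have hsurj := Finite.surjective_of_injective hinj
  intro u
  obtain ⟨v, rfl⟩ := hsurj u
  exact (not_hasUp h2 _).2 ⟨v, hτ v⟩

theorem up_of_low {n : ℕ} {a : PElt n} (h2 : TwoBlocks a) (hl : ∀ u, ¬ hasUp a u) :
    ∀ u, ¬ hasLow a u := by
  choose τ hτ using fun u => (not_hasUp h2 u).1 (hl u)
  have hinj : Function.Injective τ := by
    intro u v h
    have h1 := hτ u
    rw [h] at h1
    by_contra hne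
    exact hl u ⟨v, hne, a.trans' (a.symm' h1) (hτ v)⟩
  have hsurj := Finite.surjective_of_injective hinj
  intro u
  obtain ⟨v, rfl⟩ := hsurj u
  exact (not_hasLow h2 _).2 ⟨v, hτ v⟩

theorem structure_thm {n : ℕ} (hn : 2 ≤ n) {a : PElt n} (hpl : IsPlanar a) (h2 : TwoBlocks a)
    (hid : pmul a a = a) (hp : numPaths a = n - 2) :
    ∃ i k, i + 1 < n ∧ k + 1 < n ∧ a = hook n i k := by
  have hcl : n ≤ Nat.card {u // ¬ hasLow a u} + 2 := by
    have := Nat.card_le_card_of_surjective _ (toComp_surj a (fun u => ¬ hasLow a u)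
      (fun u h => Or.inl h) (fun θ hθ => exists_not_hasLow h2 hid hθ))
    unfold numPaths at hp
    omega
  have hcu : n ≤ Nat.card {u // ¬ hasUp a u} + 2 := by
    have := Nat.card_le_card_of_surjective _ (toComp_surj a (fun u => ¬ hasUp a u)
      (fun u h => Or.inr h) (fun θ hθ => exists_not_hasUp h2 hid hθ))
    unfold numPaths at hp
    omega
  have hel : ∃ u, hasLow a u := by
    by_contra hc
    push Not at hc
    have := no_edges hc (low_of_up h2 hc)
    omega
  have heu : ∃ u, hasUp a u := by
    by_contra hc
    push Not at hc
    have := no_edges (up_of_low h2 hc) hc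
    omega
  obtain ⟨p, q, hpq, hrpq, hlow⟩ := exists_pair (Q := hasLow a) (fun u v => a.r (.inl u) (.inl v))
    (fun u v h => a.symm' h) (fun u => Iff.rfl) hcl hel
  obtain ⟨r, s, hrs, hrrs, hup⟩ := exists_pair (Q := hasUp a) (fun u v => a.r (.inr u) (.inr v))
    (fun u v h => a.symm' h) (fun u => Iff.rfl) hcu heu
  have hqp : q.val = p.val + 1 := by
    by_contra hne
    have hm : p.val + 1 < n := by omega
    have hnl : ¬ hasLow a ⟨p.val + 1, hm⟩ := by
      rw [hlow]; simp [Fin.ext_iff]; omega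
    obtain ⟨v, hv⟩ := (not_hasLow h2 _).1 hnl
    refine hpl ⟨.inl p, .inl ⟨p.val + 1, hm⟩, .inl q, .inr v, ?_, ?_, ?_, hrpq, hv, ?_⟩
    · simp [ordIdx]
    · simp [ordIdx]; omega
    · simp [ordIdx]; omega
    · intro h
      exact hnl ⟨p, by simp [Fin.ext_iff], a.symm' h⟩
  have hsr : s.val = r.val + 1 := by
    by_contra hne
    have hm : r.val + 1 < n := by omega
    have hnl : ¬ hasUp a ⟨r.val + 1, hm⟩ := by
      rw [hup]; simp [Fin.ext_iff]; omega
    obtain ⟨v, hv⟩ := (not_hasUp h2 _).1 hnl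
    refine hpl ⟨.inl v, .inr s, .inr ⟨r.val + 1, hm⟩, .inr r, ?_, ?_, ?_, hv, a.symm' hrrs, ?_⟩
    · simp [ordIdx]; omega
    · simp [ordIdx]; omega
    · simp [ordIdx]; omega
    · intro h
      exact (not_hasUp h2 s).2 ⟨v, h⟩ ((hup s).2 (Or.inr rfl))
  have hmono : ∀ u v u' v', a.r (.inl u) (.inr v) → a.r (.inl u') (.inr v') → u < u' → v < v' := by
    intro u v u' v' h h' hlt
    have hnr : ¬ a.r (.inl u) (.inl u') := fun hr =>
      (not_hasLow h2 u).2 ⟨v, h⟩ ⟨u', hlt.ne, hr⟩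
    by_contra hc
    have hne : v ≠ v' := by
      rintro rfl
      exact hnr (a.trans' h (a.symm' h'))
    have : v' < v := lt_of_le_of_ne (not_lt.1 hc) hne.symm
    refine hpl ⟨.inl u, .inl u', .inr v, .inr v', ?_, ?_, ?_, h, h', hnr⟩ <;>
      simp [ordIdx] <;> omega
  have hlt : ∀ t : Fin (n - 2), (if t.val < p.val then t.val else t.val + 2) < n := by
    intro t; split_ifs <;> omega
  have hnlow : ∀ t : Fin (n - 2), ¬ hasLow a ⟨_, hlt t⟩ := by
    intro t
    rw [hlow]; simp [Fin.ext_iff]; split_ifs <;> omega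
  choose τ hτ using fun t => (not_hasLow h2 _).1 (hnlow t)
  have hτr : ∀ t, (τ t).val ≠ r.val ∧ (τ t).val ≠ r.val + 1 := by
    intro t
    have : ¬ hasUp a (τ t) := (not_hasUp h2 _).2 ⟨_, hτ t⟩
    rw [hup] at this
    simp [Fin.ext_iff] at this
    omega
  have hfl : ∀ t, lab r.val (n + 1) (τ t).val < n - 2 := by
    intro t
    have := hτr t
    unfold lab
    split_ifs <;> omega
  let φ : Fin (n - 2) → Fin (n - 2) := fun t => ⟨lab r.val (n + 1) (τ t).val, hfl t⟩
  have hφ : StrictMono φ := by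
    intro t t' h
    have h1 := hmono _ _ _ _ (hτ t) (hτ t') (by
      simp only [Fin.lt_def] at h ⊢
      split_ifs <;> omega)
    have h3 := hτr t
    have h4 := hτr t'
    change lab r.val (n + 1) (τ t).val < lab r.val (n + 1) (τ t').val
    unfold lab
    split_ifs <;> omega
  have hφid : ∀ t, lab r.val (n + 1) (τ t).val = t.val := by
    intro t
    have : φ t = t := le_antisymm hφ.apply_le hφ.le_apply
    exact congrArg Fin.val this
  have hi : p.val + 1 < n := by omega
  have hk : r.val + 1 < n := by omega
  have htr : ∀ u v, a.r (.inl u) (.inr v) → lab p.val n u = lab r.val (n + 1) v := by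
    intro u v h
    have hu := (not_hasLow h2 u).2 ⟨v, h⟩
    rw [hlow, Fin.ext_iff, Fin.ext_iff] at hu
    have hl : lab p.val n u < n - 2 := by
      unfold lab; split_ifs <;> omega
    have heq : (⟨_, hlt ⟨lab p.val n u, hl⟩⟩ : Fin n) = u := by
      apply Fin.ext
      simp only [lab]
      split_ifs <;> omega
    have h1 := hτ ⟨lab p.val n u, hl⟩
    rw [heq] at h1
    have h3 := h2.three h1 h (by simp) (by simp)
    rw [← Sum.inr.inj h3, hφid]
  refine ⟨p.val, r.val, hi, hk, h2.eq_of_le (hook_two hi hk) ?_⟩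
  rintro (u | u) (v | v) h <;> rw [hook_r]
  · by_cases huv : u = v
    · rw [huv]
    have h3 := (hlow u).1 ⟨v, huv, h⟩
    have h4 := (hlow v).1 ⟨u, Ne.symm huv, a.symm' h⟩
    simp only [Fin.ext_iff] at h3 h4
    simp only [labV, lab]
    split_ifs <;> omega
  · exact htr u v h
  · exact (htr v u (a.symm' h)).symm
  · by_cases huv : u = v
    · rw [huv]
    have h3 := (hup u).1 ⟨v, huv, h⟩
    have h4 := (hup v).1 ⟨u, Ne.symm huv, a.symm' h⟩
    simp only [Fin.ext_iff] at h3 h4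
    simp only [labV, lab]
    split_ifs <;> omega

/-- Enumeration of the idempotents. -/
def enum (n : ℕ) : Fin (n - 1) ⊕ (Fin (n - 2) ⊕ Fin (n - 2)) → PElt n
  | .inl i => hook n i i
  | .inr (.inl i) => hook n i (i + 1)
  | .inr (.inr i) => hook n (i + 1) i

theorem enum_inj (n : ℕ) : Function.Injective (enum n) := by
  rintro (⟨i, hi⟩ | ⟨i, hi⟩ | ⟨i, hi⟩) (⟨j, hj⟩ | ⟨j, hj⟩ | ⟨j, hj⟩) h <;>
    simp only [enum] at h <;>
    have := hook_inj (by omega) (by omega) h <;> simp <;> omega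

theorem enum_range (n : ℕ) (hn : 2 ≤ n) : Set.range (enum n) =
    {a : PElt n | a ∈ Jones n ∧ pmul a a = a ∧ (numPaths a : ℤ) = (n : ℤ) - 2} := by
  have key : ∀ i k, i + 1 < n → k + 1 < n → i ≤ k + 1 → k ≤ i + 1 → hook n i k ∈
      {a : PElt n | a ∈ Jones n ∧ pmul a a = a ∧ (numPaths a : ℤ) = (n : ℤ) - 2} := by
    intro i k h1 h2 h3 h4
    refine ⟨(jones_iff _).2 ⟨hook_planar h1 h2, hook_two h1 h2⟩, hook_idem h1 h2 h3 h4, ?_⟩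
    rw [hook_numPaths h1 h2 h3 h4]
    omega
  ext a
  constructor
  · rintro ⟨(⟨i, hi⟩ | ⟨i, hi⟩ | ⟨i, hi⟩), rfl⟩ <;>
      exact key _ _ (by simp; omega) (by simp; omega) (by simp; try omega) (by simp; try omega)
  · rintro ⟨hJ, hid, hp⟩
    obtain ⟨hpl, h2⟩ := (jones_iff _).1 hJ
    obtain ⟨i, k, hi, hk, rfl⟩ := structure_thm hn hpl h2 hid (by omega)
    have := hook_not_idem hi hk hid
    rcases (show i = k ∨ i = k + 1 ∨ k = i + 1 by omega) with rfl | rfl | rfl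
    · exact ⟨.inl ⟨i, by omega⟩, rfl⟩
    · exact ⟨.inr (.inr ⟨k, by omega⟩), rfl⟩
    · exact ⟨.inr (.inl ⟨i, by omega⟩), rfl⟩

/-- Proposition 6.4. For all `n ≥ 2`, the number of idempotents of
the Jones monoid `J_n` of rank `n − 2` is `e_{n;·,n−2} = 3n − 5`. -/
theorem jones_depth_one (n : ℕ) (hn : 2 ≤ n) :
    eJdot n ((n : ℤ) - 2) = 3 * n - 5 := by
  unfold eJdot
  rw [← enum_range n hn, Nat.card_range_of_injective (enum_inj n)]
  simp
  omega
end

section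
/- For all n ≥ 5, the number of idempotents of the Jones monoid J_n of rank n − 4 is e_{n;·,n−4} = (n/2)(9n − 35). -/
open Relation

/-! ### Twisted semigroup algebras -/

variable {K : Type} [Field K]

theorem jd_gconn_refl {n : ℕ} (a : PElt n) (i : Fin n) : gconn a i i := EqvGen.refl _
theorem jd_gconn_symm {n : ℕ} {a : PElt n} {i j : Fin n} (h : gconn a i j) : gconn a j i :=
  EqvGen.symm _ _ h
theorem jd_gconn_trans {n : ℕ} {a : PElt n} {i j k : Fin n} (h : gconn a i j)
    (h' : gconn a j k) : gconn a i k := EqvGen.trans _ _ _ h h'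

theorem jd_gconn_low {n : ℕ} {a : PElt n} {i j : Fin n} (h : a.r (.inl i) (.inl j)) :
    gconn a i j := by
  by_cases e : i = j
  · subst e; exact jd_gconn_refl a i
  · exact EqvGen.rel _ _ (Or.inl ⟨e, h⟩)

theorem jd_gconn_up {n : ℕ} {a : PElt n} {i j : Fin n} (h : a.r (.inr i) (.inr j)) :
    gconn a i j := by
  by_cases e : i = j
  · subst e; exact jd_gconn_refl a i
  · exact EqvGen.rel _ _ (Or.inr ⟨e, h⟩)

theorem jd_r_symm {n : ℕ} {a : PElt n} {x y : PV n} (h : a.r x y) : a.r y x := a.iseqv.symm h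
theorem jd_r_trans {n : ℕ} {a : PElt n} {x y z : PV n} (h : a.r x y) (h' : a.r y z) : a.r x z :=
  a.iseqv.trans h h'
theorem jd_r_refl {n : ℕ} (a : PElt n) (x : PV n) : a.r x x := a.iseqv.refl x

theorem jd_stack_label {n : ℕ} {β : Type*} {a b : PElt n} (F : TV n → β)
    (hu : ∀ p q, a.r p q → F (upEmb p) = F (upEmb q))
    (hd : ∀ p q, b.r p q → F (downEmb p) = F (downEmb q)) {x y : TV n}
    (h : EqvGen (stackRel a b) x y) : F x = F y := by
  induction h with
  | rel x y h =>
    rcases h with ⟨p, q, h, rfl, rfl⟩ | ⟨p, q, h, rfl, rfl⟩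
    · exact hu p q h
    · exact hd p q h
  | refl => rfl
  | symm _ _ _ ih => exact ih.symm
  | trans _ _ _ _ _ ih ih' => exact ih.trans ih'

theorem jd_stack_up {n : ℕ} {a b : PElt n} {p q : PV n} (h : a.r p q) :
    EqvGen (stackRel a b) (upEmb p) (upEmb q) := EqvGen.rel _ _ (Or.inl ⟨p, q, h, rfl, rfl⟩)
theorem jd_stack_down {n : ℕ} {a b : PElt n} {p q : PV n} (h : b.r p q) :
    EqvGen (stackRel a b) (downEmb p) (downEmb q) := EqvGen.rel _ _ (Or.inr ⟨p, q, h, rfl, rfl⟩)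

theorem jd_stack_mid {n : ℕ} {a : PElt n} {i j : Fin n} (h : gconn a i j) :
    EqvGen (stackRel a a) (.inr (.inl i)) (.inr (.inl j)) := by
  induction h with
  | rel x y h =>
    rcases h with h | h
    · exact jd_stack_down h.2
    · exact jd_stack_up h.2
  | refl => exact EqvGen.refl _
  | symm _ _ _ ih => exact EqvGen.symm _ _ ih
  | trans _ _ _ _ _ ih ih' => exact EqvGen.trans _ _ _ ih ih'

/-- In an idempotent, transversals join connected vertices. -/
theorem jd_idem_gconn {n : ℕ} {a : PElt n} (h : pmul a a = a) {i j : Fin n}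
    (t : a.r (.inl i) (.inr j)) : gconn a i j := by
  let F : TV n → Set (Fin n) := fun x => match x with
    | .inl i => {v | ∃ j, a.r (.inl i) (.inr j) ∧ gconn a j v}
    | .inr (.inl w) => {v | gconn a w v}
    | .inr (.inr l) => {v | ∃ k, a.r (.inl k) (.inr l) ∧ gconn a k v}
  have t' : (pmul a a).r (.inl i) (.inr j) := by rw [h]; exact t
  have hF : F (.inl i) = F (.inr (.inr j)) := by
    refine jd_stack_label (a := a) (b := a) F ?_ ?_ t'
    · rintro (p | p) (q | q) hpq <;> ext v
      · exact ⟨fun ⟨j, h1, h2⟩ => ⟨j, jd_r_trans (jd_r_symm hpq) h1, h2⟩,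
          fun ⟨j, h1, h2⟩ => ⟨j, jd_r_trans hpq h1, h2⟩⟩
      · exact ⟨fun ⟨j, h1, h2⟩ => jd_gconn_trans
          (jd_gconn_up (jd_r_trans (jd_r_symm hpq) h1)) h2, fun h => ⟨q, hpq, h⟩⟩
      · exact ⟨fun h => ⟨p, jd_r_symm hpq, h⟩, fun ⟨j, h1, h2⟩ => jd_gconn_trans
          (jd_gconn_up (jd_r_trans hpq h1)) h2⟩
      · exact ⟨fun h => jd_gconn_trans (jd_gconn_symm (jd_gconn_up hpq)) h,
          fun h => jd_gconn_trans (jd_gconn_up hpq) h⟩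
    · rintro (p | p) (q | q) hpq <;> ext v
      · exact ⟨fun h => jd_gconn_trans (jd_gconn_symm (jd_gconn_low hpq)) h,
          fun h => jd_gconn_trans (jd_gconn_low hpq) h⟩
      · exact ⟨fun h => ⟨p, hpq, h⟩, fun ⟨k, h1, h2⟩ => jd_gconn_trans
          (jd_gconn_low (jd_r_trans hpq (jd_r_symm h1))) h2⟩
      · exact ⟨fun ⟨k, h1, h2⟩ => jd_gconn_trans
          (jd_gconn_low (jd_r_trans (jd_r_symm hpq) (jd_r_symm h1))) h2,
          fun h => ⟨q, jd_r_symm hpq, h⟩⟩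
      · exact ⟨fun ⟨j, h1, h2⟩ => ⟨j, jd_r_trans h1 hpq, h2⟩,
          fun ⟨j, h1, h2⟩ => ⟨j, jd_r_trans h1 (jd_r_symm hpq), h2⟩⟩
  have hj : j ∈ F (.inl i) := ⟨j, t, jd_gconn_refl a j⟩
  rw [hF] at hj
  obtain ⟨k, h1, h2⟩ := hj
  exact jd_gconn_trans (jd_gconn_low (jd_r_trans t (jd_r_symm h1))) h2

theorem jd_idem_inj {n : ℕ} {a : PElt n} (h : pmul a a = a) {i j i' j' : Fin n}
    (t : a.r (.inl i) (.inr j)) (t' : a.r (.inl i') (.inr j')) (g : gconn a i i') :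
    a.r (.inl i) (.inl i') := by
  have g2 : gconn a j j' := jd_gconn_trans (jd_gconn_symm (jd_idem_gconn h t))
    (jd_gconn_trans g (jd_idem_gconn h t'))
  rw [← h]
  have e1 := jd_stack_up (b := a) t
  have e2 := jd_stack_mid g2
  have e3 := jd_stack_up (b := a) (jd_r_symm t')
  exact EqvGen.trans _ _ _ e1 (EqvGen.trans _ _ _ e2 e3)

theorem jd_idem_of {n : ℕ} {a : PElt n}
    (hc : ∀ i j, a.r (.inl i) (.inr j) → gconn a i j)
    (hi : ∀ i j i' j', a.r (.inl i) (.inr j) → a.r (.inl i') (.inr j') → gconn a i i' →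
      a.r (.inl i) (.inl i')) : pmul a a = a := by
  let F : TV n → Set (PV n) := fun x => match x with
    | .inl i => {x | a.r (.inl i) x}
    | .inr (.inl v) => {x | ∃ i j, a.r (.inl i) (.inr j) ∧ gconn a i v ∧ a.r (.inl i) x}
    | .inr (.inr l) => {x | a.r (.inr l) x}
  have hF : ∀ x y, EqvGen (stackRel a a) x y → F x = F y := by
    intro x y hxy
    have key : ∀ i j v, a.r (.inl i) (.inr j) → gconn a i v →
        F (.inr (.inl v)) = {x | a.r (.inl i) x} := by
      intro i j v t g
      ext x
      exact ⟨fun ⟨i', j', t', g', h⟩ => jd_r_trans (hi i j i' j' t t'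
        (jd_gconn_trans g (jd_gconn_symm g'))) h, fun h => ⟨i, j, t, g, h⟩⟩
    have kmid : ∀ v w, gconn a v w → F (.inr (.inl v)) = F (.inr (.inl w)) := by
      intro v w g
      ext x
      exact ⟨fun ⟨i', j', t', g', h⟩ => ⟨i', j', t', jd_gconn_trans g' g, h⟩,
        fun ⟨i', j', t', g', h⟩ => ⟨i', j', t', jd_gconn_trans g' (jd_gconn_symm g), h⟩⟩
    have cls : ∀ x y : PV n, a.r x y → {z | a.r x z} = {z | a.r y z} := by
      intro x y h
      ext z
      exact ⟨fun h' => jd_r_trans (jd_r_symm h) h', fun h' => jd_r_trans h h'⟩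
    refine jd_stack_label (a := a) (b := a) F ?_ ?_ hxy
    · rintro (p | p) (q | q) hpq
      · exact cls _ _ hpq
      · exact (key p q q hpq (hc _ _ hpq)).symm
      · exact (key q p p (jd_r_symm hpq) (hc _ _ (jd_r_symm hpq)))
      · exact kmid _ _ (jd_gconn_up hpq)
    · rintro (p | p) (q | q) hpq
      · exact kmid _ _ (jd_gconn_low hpq)
      · exact (key p q p hpq (jd_gconn_refl _ _)).trans (cls _ _ hpq)
      · exact ((key q p q (jd_r_symm hpq) (jd_gconn_refl _ _)).trans
          (cls _ _ (jd_r_symm hpq))).symm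
      · exact cls _ _ hpq
  have tr : ∀ i j, a.r (.inl i) (.inr j) →
      EqvGen (stackRel a a) (.inl i) (.inr (.inr j)) := fun i j t =>
    EqvGen.trans _ _ _ (jd_stack_up (b := a) t)
      (EqvGen.trans _ _ _ (jd_stack_mid (jd_gconn_symm (hc i j t))) (jd_stack_down (a := a) t))
  ext x y
  constructor
  · intro h
    have h2 := hF _ _ h
    rcases x with x | x <;> rcases y with y | y
    all_goals
      first
      | exact (Set.ext_iff.1 h2 _).2 (jd_r_refl a _)
  · intro h
    rcases x with x | x <;> rcases y with y | y
    · exact jd_stack_up (b := a) h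
    · exact tr _ _ h
    · exact EqvGen.symm _ _ (tr _ _ (jd_r_symm h))
    · exact jd_stack_down (a := a) h

/-- Two matchings: a component with two ends of one kind has no end of the other kind. -/
theorem jd_dihedral {α : Type*} (σ τ : Equiv.Perm α) (hσ : ∀ x, σ (σ x) = x)
    (hτ : ∀ x, τ (τ x) = x) {R : α → α → Prop} (hR : ∀ x y, R x y → y = σ x ∨ y = τ x)
    {i i' j : α} (hi : σ i = i) (hi' : σ i' = i') (hj : τ j = j) (h1 : EqvGen R i i')
    (h2 : EqvGen R i j) : i = i' := by
  set c : Equiv.Perm α := σ * τ with hc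
  have hσ2 : σ * σ = 1 := by ext x; exact hσ x
  have hτ2 : τ * τ = 1 := by ext x; exact hτ x
  have hσi : σ⁻¹ = σ := inv_eq_of_mul_eq_one_left hσ2
  have hτi : τ⁻¹ = τ := inv_eq_of_mul_eq_one_left hτ2
  have conj : σ * c * σ⁻¹ = c⁻¹ := by
    rw [hc, mul_inv_rev, hσi, hτi, ← mul_assoc, hσ2, one_mul]
  have hs : ∀ k : ℤ, σ ((c ^ k) i) = (c ^ (-k)) i := by
    intro k
    have : (σ * c * σ⁻¹) ^ k = c ^ (-k) := by rw [conj, inv_zpow, zpow_neg]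
    rw [conj_zpow] at this
    have h := congrArg (fun f : Equiv.Perm α => f i) this
    simpa [hσi, hi] using h
  have ht : ∀ k : ℤ, τ ((c ^ k) i) = (c ^ (-k - 1)) i := by
    intro k
    have e : τ = σ * c := by rw [hc, ← mul_assoc, hσ2, one_mul]
    have : τ ((c ^ k) i) = σ ((c ^ (k + 1)) i) := by
      rw [add_comm, zpow_add, zpow_one]
      conv_lhs => rw [e]
      rfl
    rw [this, hs]
    congr 2
    ring
  have orb : ∀ x y, EqvGen R x y → ((∃ k : ℤ, x = (c ^ k) i) ↔ (∃ k : ℤ, y = (c ^ k) i)) := by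
    intro x y h
    induction h with
    | rel x y h =>
      have fw : ∀ x y, (y = σ x ∨ y = τ x) → (∃ k : ℤ, x = (c ^ k) i) →
          (∃ k : ℤ, y = (c ^ k) i) := by
        rintro x y (rfl | rfl) ⟨k, rfl⟩
        · exact ⟨-k, hs k⟩
        · exact ⟨-k - 1, ht k⟩
      refine ⟨fw x y (hR x y h), fw y x ?_⟩
      rcases hR x y h with rfl | rfl
      · left; exact (hσ _).symm
      · right; exact (hτ _).symm
    | refl => rfl
    | symm _ _ _ ih => exact ih.symm
    | trans _ _ _ _ _ ih ih' => exact ih.trans ih'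
  obtain ⟨k, hk⟩ := (orb _ _ h1).1 ⟨0, by simp⟩
  obtain ⟨l, hl⟩ := (orb _ _ h2).1 ⟨0, by simp⟩
  have cancel : ∀ u v : ℤ, (c ^ u) i = (c ^ v) i → (c ^ (v - u)) i = i := by
    intro u v h
    rw [sub_eq_neg_add, zpow_add, Equiv.Perm.mul_apply, ← h, ← Equiv.Perm.mul_apply, ← zpow_add]
    simp
  have p1 : (c ^ (k - -k)) i = i := by
    apply cancel
    rw [← hs, ← hk, hi']
  have p2 : (c ^ (l - (-l - 1))) i = i := by
    apply cancel
    rw [← ht, ← hl, hj]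
  have q1 := Equiv.Perm.zpow_apply_eq_self_of_apply_eq_self p1 (-l)
  have q2 := Equiv.Perm.zpow_apply_eq_self_of_apply_eq_self p2 k
  rw [← zpow_mul] at q1 q2
  have e : k = (k - -k) * (-l) + (l - (-l - 1)) * k := by ring
  rw [hk, e, zpow_add, Equiv.Perm.mul_apply, q2, q1]

/-! ### Jones elements -/

theorem jd_J1 {n : ℕ} {a : PElt n} (ha : a ∈ Jones n) {x y z : PV n} (h : a.r x y)
    (h' : a.r x z) : x = y ∨ x = z ∨ y = z := by
  have h2 := ha.2 x
  unfold blockCard at h2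
  rw [Nat.card_eq_two_iff' (⟨x, jd_r_refl a x⟩ : {y : PV n // a.r x y})] at h2
  obtain ⟨w, _, hw⟩ := h2
  by_cases e1 : x = y
  · exact Or.inl e1
  by_cases e2 : x = z
  · exact Or.inr (Or.inl e2)
  have u1 := hw ⟨y, h⟩ (fun e => e1 (congrArg Subtype.val e).symm)
  have u2 := hw ⟨z, h'⟩ (fun e => e2 (congrArg Subtype.val e).symm)
  exact Or.inr (Or.inr (congrArg Subtype.val (u1.trans u2.symm)))

theorem jd_J2 {n : ℕ} {a : PElt n} (ha : a ∈ Jones n) (x : PV n) : ∃ y, y ≠ x ∧ a.r x y := by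
  have h2 := ha.2 x
  unfold blockCard at h2
  rw [Nat.card_eq_two_iff' (⟨x, jd_r_refl a x⟩ : {y : PV n // a.r x y})] at h2
  obtain ⟨w, h, _⟩ := h2
  exact ⟨w.1, fun e => h (Subtype.ext e), w.2⟩

theorem jd_blockCard {n : ℕ} {a : PElt n} (x : PV n) (h1 : ∃ y, y ≠ x ∧ a.r x y)
    (h2 : ∀ y z, a.r x y → a.r x z → x = y ∨ x = z ∨ y = z) : blockCard a x = 2 := by
  unfold blockCard
  rw [Nat.card_eq_two_iff' (⟨x, jd_r_refl a x⟩ : {y : PV n // a.r x y})]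
  obtain ⟨y, hy, h⟩ := h1
  refine ⟨⟨y, h⟩, fun e => hy (congrArg Subtype.val e), ?_⟩
  rintro ⟨z, hz⟩ hne
  have hne' : z ≠ x := fun e => hne (Subtype.ext e)
  rcases h2 y z h hz with e | e | e
  · exact absurd e.symm hy
  · exact absurd e.symm hne'
  · exact Subtype.ext e.symm

/-- Equality of Jones elements follows from one inclusion. -/
theorem jd_eq_of_le {n : ℕ} {a b : PElt n} (ha : a ∈ Jones n) (hb : b ∈ Jones n)
    (h : ∀ x y, a.r x y → b.r x y) : a = b := by
  ext x y
  refine ⟨h x y, fun hxy => ?_⟩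
  obtain ⟨z, hz, hxz⟩ := jd_J2 ha x
  rcases jd_J1 hb hxy (h _ _ hxz) with e | e | e
  · rw [← e]
  · exact absurd e.symm hz
  · rw [e]; exact hxz

theorem jd_not_low {n : ℕ} {a : PElt n} (ha : a ∈ Jones n) (i : Fin n) :
    ¬ hasLow a i ↔ ∃ j, a.r (.inl i) (.inr j) := by
  constructor
  · intro h
    obtain ⟨y, hy, hr⟩ := jd_J2 ha (.inl i)
    rcases y with j | j
    · exact absurd ⟨j, fun e => hy (by rw [e]), hr⟩ h
    · exact ⟨j, hr⟩
  · rintro ⟨j, hj⟩ ⟨k, hk, hr⟩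
    rcases jd_J1 ha hj hr with e | e | e
    · exact absurd e (by simp)
    · exact hk (by simpa using e)
    · exact absurd e (by simp)

theorem jd_not_up {n : ℕ} {a : PElt n} (ha : a ∈ Jones n) (j : Fin n) :
    ¬ hasUp a j ↔ ∃ i, a.r (.inl i) (.inr j) := by
  constructor
  · intro h
    obtain ⟨y, hy, hr⟩ := jd_J2 ha (.inr j)
    rcases y with i | i
    · exact ⟨i, jd_r_symm hr⟩
    · exact absurd ⟨i, fun e => hy (by rw [e]), hr⟩ h
  · rintro ⟨i, hj⟩ ⟨k, hk, hr⟩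
    rcases jd_J1 ha (jd_r_symm hj) hr with e | e | e
    · exact absurd e (by simp)
    · exact hk (by simpa using e)
    · exact absurd e (by simp)

/-- The involution associated to a relation whose classes have at most two elements. -/
theorem jd_mate {α : Type*} (s : Setoid α)
    (h : ∀ x y z, s.r x y → s.r x z → x = y ∨ x = z ∨ y = z) :
    ∃ σ : Equiv.Perm α, (∀ x, σ (σ x) = x) ∧ (∀ x, s.r x (σ x)) ∧
      ∀ x y, x ≠ y → s.r x y → y = σ x := by
  classical
  have : ∀ x, ∃ y, s.r x y ∧ ∀ z, x ≠ z → s.r x z → z = y := by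
    intro x
    by_cases hx : ∃ y, x ≠ y ∧ s.r x y
    · obtain ⟨y, hy, hr⟩ := hx
      refine ⟨y, hr, fun z hz hr' => ?_⟩
      rcases h x y z hr hr' with e | e | e
      · exact absurd e hy
      · exact absurd e hz
      · exact e.symm
    · exact ⟨x, s.iseqv.refl x, fun z hz hr => absurd ⟨z, hz, hr⟩ hx⟩
  choose f hf hf' using this
  have inv : Function.Involutive f := by
    intro x
    by_cases e : x = f x
    · rw [← e]; exact e.symm
    · exact (hf' (f x) x (fun e' => e e'.symm) (s.iseqv.symm (hf x))).symm
  exact ⟨inv.toPerm f, inv, hf, hf'⟩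

theorem jd_idem_iff {n : ℕ} {a : PElt n} (ha : a ∈ Jones n) :
    pmul a a = a ↔ ∀ i j, a.r (.inl i) (.inr j) → gconn a i j := by
  refine ⟨fun h i j t => jd_idem_gconn h t, fun hc => jd_idem_of hc ?_⟩
  intro i j i' j' t t' g
  obtain ⟨σ, σ1, σ2, σ3⟩ := jd_mate (Setoid.comap (Sum.inl : Fin n → PV n) a) (by
    intro x y z h h'
    have := jd_J1 ha h h'
    simpa using this)
  obtain ⟨τ, τ1, τ2, τ3⟩ := jd_mate (Setoid.comap (Sum.inr : Fin n → PV n) a) (by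
    intro x y z h h'
    have := jd_J1 ha h h'
    simpa using this)
  have fixL : ∀ i j, a.r (.inl i) (.inr j) → σ i = i := by
    intro i j t
    by_contra hne
    exact (jd_not_low ha i).2 ⟨j, t⟩ ⟨σ i, fun e => hne e.symm, σ2 i⟩
  have fixU : τ j = j := by
    by_contra hne
    exact (jd_not_up ha j).2 ⟨i, t⟩ ⟨τ j, fun e => hne e.symm, τ2 j⟩
  have : i = i' := by
    refine jd_dihedral σ τ σ1 τ1 (R := gedge a) ?_ (fixL i j t) (fixL i' j' t') fixU g (hc i j t)
    rintro x y (h | h)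
    · exact Or.inl (σ3 x y h.1 h.2)
    · exact Or.inr (τ3 x y h.1 h.2)
  rw [this]

/-- In an idempotent, each lower edge meets an upper edge. -/
theorem jd_touch_low {n : ℕ} {a : PElt n} (ha : a ∈ Jones n) (h : pmul a a = a) {x y : Fin n}
    (e : LowEdge a x y) : hasUp a x ∨ hasUp a y := by
  by_contra hcon
  push Not at hcon
  obtain ⟨hx, hy⟩ := hcon
  have clo : ∀ u v, gconn a u v → ((u = x ∨ u = y) ↔ (v = x ∨ v = y)) := by
    intro u v g
    induction g with
    | rel u v g =>
      have fw : ∀ u v, gedge a u v → (u = x ∨ u = y) → (v = x ∨ v = y) := by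
        rintro u v (g | g) hu
        · rcases hu with rfl | rfl
          · rcases jd_J1 ha g.2 e.2 with q | q | q
            · exact absurd (Sum.inl.inj q) g.1
            · exact absurd (Sum.inl.inj q) e.1
            · exact Or.inr (Sum.inl.inj q)
          · rcases jd_J1 ha g.2 (jd_r_symm e.2) with q | q | q
            · exact absurd (Sum.inl.inj q) g.1
            · exact absurd (Sum.inl.inj q).symm e.1
            · exact Or.inl (Sum.inl.inj q)
        · rcases hu with rfl | rfl
          · exact absurd ⟨v, g⟩ hx
          · exact absurd ⟨v, g⟩ hy
      refine ⟨fw u v g, fw v u ?_⟩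
      rcases g with g | g
      · exact Or.inl ⟨g.1.symm, jd_r_symm g.2⟩
      · exact Or.inr ⟨g.1.symm, jd_r_symm g.2⟩
    | refl => rfl
    | symm _ _ _ ih => exact ih.symm
    | trans _ _ _ _ _ ih ih' => exact ih.trans ih'
  obtain ⟨u, hu⟩ := (jd_not_up ha x).1 hx
  have hul := (jd_not_low ha u).2 ⟨x, hu⟩
  rcases (clo _ _ (jd_idem_gconn h hu)).2 (Or.inl rfl) with rfl | rfl
  · exact hul ⟨y, e⟩
  · exact hul ⟨x, e.1.symm, jd_r_symm e.2⟩

/-- In an idempotent, each upper edge meets a lower edge. -/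
theorem jd_touch_up {n : ℕ} {a : PElt n} (ha : a ∈ Jones n) (h : pmul a a = a) {x y : Fin n}
    (e : UpEdge a x y) : hasLow a x ∨ hasLow a y := by
  by_contra hcon
  push Not at hcon
  obtain ⟨hx, hy⟩ := hcon
  have clo : ∀ u v, gconn a u v → ((u = x ∨ u = y) ↔ (v = x ∨ v = y)) := by
    intro u v g
    induction g with
    | rel u v g =>
      have fw : ∀ u v, gedge a u v → (u = x ∨ u = y) → (v = x ∨ v = y) := by
        rintro u v (g | g) hu
        · rcases hu with rfl | rfl
          · exact absurd ⟨v, g⟩ hx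
          · exact absurd ⟨v, g⟩ hy
        · rcases hu with rfl | rfl
          · rcases jd_J1 ha g.2 e.2 with q | q | q
            · exact absurd (Sum.inr.inj q) g.1
            · exact absurd (Sum.inr.inj q) e.1
            · exact Or.inr (Sum.inr.inj q)
          · rcases jd_J1 ha g.2 (jd_r_symm e.2) with q | q | q
            · exact absurd (Sum.inr.inj q) g.1
            · exact absurd (Sum.inr.inj q).symm e.1
            · exact Or.inl (Sum.inr.inj q)
      refine ⟨fw u v g, fw v u ?_⟩
      rcases g with g | g
      · exact Or.inl ⟨g.1.symm, jd_r_symm g.2⟩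
      · exact Or.inr ⟨g.1.symm, jd_r_symm g.2⟩
    | refl => rfl
    | symm _ _ _ ih => exact ih.symm
    | trans _ _ _ _ _ ih ih' => exact ih.trans ih'
  obtain ⟨u, hu⟩ := (jd_not_low ha x).1 hx
  have hul := (jd_not_up ha u).2 ⟨x, hu⟩
  rcases (clo _ _ (jd_idem_gconn h hu)).1 (Or.inl rfl) with rfl | rfl
  · exact hul ⟨y, e⟩
  · exact hul ⟨x, e.1.symm, jd_r_symm e.2⟩

/-- For idempotents, the path components correspond to the transversals. -/
theorem jd_numPaths {n : ℕ} {a : PElt n} (ha : a ∈ Jones n) (h : pmul a a = a) :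
    numPaths a = Nat.card {i : Fin n // ¬ hasLow a i} := by
  symm
  unfold numPaths
  have comp : ∀ i, IsComp a {k | gconn a i k} := fun i =>
    ⟨⟨i, jd_gconn_refl a i⟩, fun k hk j => ⟨fun g => jd_gconn_trans hk g,
      fun g => jd_gconn_trans (jd_gconn_symm hk) g⟩⟩
  refine Nat.card_congr (Equiv.ofBijective
    (fun i => ⟨{k | gconn a i.1 k}, comp i.1, i.1, jd_gconn_refl a _, Or.inl i.2⟩) ⟨?_, ?_⟩)
  · rintro ⟨i, hi⟩ ⟨i', hi'⟩ hh
    have hs : {k | gconn a i k} = {k | gconn a i' k} := congrArg Subtype.val hh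
    have g : gconn a i i' := by
      have : i' ∈ {k | gconn a i' k} := jd_gconn_refl a i'
      rw [← hs] at this
      exact this
    obtain ⟨j, hj⟩ := (jd_not_low ha i).1 hi
    obtain ⟨j', hj'⟩ := (jd_not_low ha i').1 hi'
    have r := jd_idem_inj h hj hj' g
    apply Subtype.ext
    by_contra hne
    exact hi ⟨i', hne, r⟩
  · rintro ⟨θ, hθ, v, hv, hfree⟩
    have : ∃ i ∈ θ, ¬ hasLow a i := by
      rcases hfree with hf | hf
      · exact ⟨v, hv, hf⟩
      · obtain ⟨i, hi⟩ := (jd_not_up ha v).1 hf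
        exact ⟨i, (hθ.2 v hv i).1 (jd_gconn_symm (jd_idem_gconn h hi)),
          (jd_not_low ha i).2 ⟨v, hi⟩⟩
    obtain ⟨i, hi, hl⟩ := this
    refine ⟨⟨i, hl⟩, Subtype.ext ?_⟩
    ext k
    exact hθ.2 i hi k

/-- Left endpoint of the arc with right endpoint `b2`. -/
def jdOpn (b1 b2 : ℕ) : ℕ := if b2 = b1 + 1 then b1 - 2 else b2 - 1

/-- `b1 < b2` are the right endpoints of a two-arc row pattern on `n` points. -/
def jdVal (n b1 b2 : ℕ) : Prop := 1 ≤ b1 ∧ b1 < b2 ∧ b2 < n ∧ 3 ≤ b2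

def jdCov (b1 b2 i : ℕ) : Prop := i = b1 - 1 ∨ i = b1 ∨ i = jdOpn b1 b2 ∨ i = b2

def jdTch (b1 b2 c1 c2 : ℕ) : Prop :=
  (jdCov c1 c2 (b1 - 1) ∨ jdCov c1 c2 b1) ∧ (jdCov c1 c2 (jdOpn b1 b2) ∨ jdCov c1 c2 b2)

def jdGood (b1 b2 c1 c2 : ℕ) : Prop := jdTch b1 b2 c1 c2 ∧ jdTch c1 c2 b1 b2

instance (n b1 b2 : ℕ) : Decidable (jdVal n b1 b2) := by unfold jdVal; infer_instance
instance (b1 b2 i : ℕ) : Decidable (jdCov b1 b2 i) := by unfold jdCov; infer_instance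
instance (b1 b2 c1 c2 : ℕ) : Decidable (jdTch b1 b2 c1 c2) := by unfold jdTch; infer_instance
instance (b1 b2 c1 c2 : ℕ) : Decidable (jdGood b1 b2 c1 c2) := by unfold jdGood; infer_instance

/-- Row code: `-1`, `-2` for the arcs, the position for free points. -/
def jdRc (b1 b2 i : ℕ) : ℤ :=
  if i = b1 - 1 ∨ i = b1 then -1 else if i = jdOpn b1 b2 ∨ i = b2 then -2 else
    (i : ℤ) - (if b1 ≤ i then 2 else 0) - (if b2 ≤ i then 2 else 0)

/-- Partner in the row pattern. -/
def jdMt (b1 b2 i : ℕ) : ℕ :=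
  if i = b1 - 1 then b1 else if i = b1 then b1 - 1 else
    if i = jdOpn b1 b2 then b2 else if i = b2 then jdOpn b1 b2 else i

/-- Case description of a row pattern. -/
theorem jdRc_cases {n b1 b2 : ℕ} (h : jdVal n b1 b2) (i : ℕ) :
    (i + 1 = b1 ∧ jdRc b1 b2 i = -1 ∧ jdMt b1 b2 i = i + 1) ∨
    (i = b1 ∧ jdRc b1 b2 i = -1 ∧ jdMt b1 b2 i + 1 = i) ∨
    (b2 = b1 + 1 ∧ i + 2 = b1 ∧ jdRc b1 b2 i = -2 ∧ jdMt b1 b2 i = i + 3) ∨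
    (b2 = b1 + 1 ∧ i = b2 ∧ jdRc b1 b2 i = -2 ∧ jdMt b1 b2 i + 3 = i) ∨
    (b1 + 2 ≤ b2 ∧ i + 1 = b2 ∧ jdRc b1 b2 i = -2 ∧ jdMt b1 b2 i = i + 1) ∨
    (b1 + 2 ≤ b2 ∧ i = b2 ∧ jdRc b1 b2 i = -2 ∧ jdMt b1 b2 i + 1 = i) ∨
    (b2 < i ∧ jdRc b1 b2 i = i - 4 ∧ jdMt b1 b2 i = i) ∨
    (b1 < i ∧ i + 1 < b2 ∧ jdRc b1 b2 i = i - 2 ∧ jdMt b1 b2 i = i) ∨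
    (i + 1 < b1 ∧ b1 + 2 ≤ b2 ∧ jdRc b1 b2 i = i ∧ jdMt b1 b2 i = i) ∨
    (i + 2 < b1 ∧ b2 = b1 + 1 ∧ jdRc b1 b2 i = i ∧ jdMt b1 b2 i = i) := by
  unfold jdVal at h
  have ho : (b2 = b1 + 1 ∧ jdOpn b1 b2 + 2 = b1) ∨ (b1 + 2 ≤ b2 ∧ jdOpn b1 b2 + 1 = b2) := by
    unfold jdOpn
    split_ifs <;> omega
  have hpos : (i + 1 = b1) ∨ (i = b1) ∨ (b2 = b1 + 1 ∧ i + 2 = b1) ∨ (b2 = b1 + 1 ∧ i = b2) ∨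
      (b1 + 2 ≤ b2 ∧ i + 1 = b2) ∨ (b1 + 2 ≤ b2 ∧ i = b2) ∨ (b2 < i) ∨ (b1 < i ∧ i + 1 < b2) ∨
      (i + 1 < b1 ∧ b1 + 2 ≤ b2) ∨ (i + 2 < b1 ∧ b2 = b1 + 1) := by omega
  unfold jdRc jdMt
  generalize jdOpn b1 b2 = o at ho
  rcases hpos with p | p | p | p | p | p | p | p | p | p
  · left
    rw [if_pos (by omega), if_pos (by omega)]; omega
  · iterate 1 right
    left
    rw [if_pos (by omega), if_neg (by omega), if_pos (by omega)]; omega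
  · iterate 2 right
    left
    rw [if_neg (by omega), if_pos (by omega), if_neg (by omega), if_neg (by omega),
      if_pos (by omega)]; omega
  · iterate 3 right
    left
    rw [if_neg (by omega), if_pos (by omega), if_neg (by omega), if_neg (by omega),
      if_neg (by omega), if_pos (by omega)]; omega
  · iterate 4 right
    left
    rw [if_neg (by omega), if_pos (by omega), if_neg (by omega), if_neg (by omega),
      if_pos (by omega)]; omega
  · iterate 5 right
    left
    rw [if_neg (by omega), if_pos (by omega), if_neg (by omega), if_neg (by omega),
      if_neg (by omega), if_pos (by omega)]; omega
  · iterate 6 right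
    left
    rw [if_neg (by omega), if_neg (by omega), if_pos (by omega), if_pos (by omega),
      if_neg (by omega), if_neg (by omega), if_neg (by omega), if_neg (by omega)]; omega
  · iterate 7 right
    left
    rw [if_neg (by omega), if_neg (by omega), if_pos (by omega), if_neg (by omega),
      if_neg (by omega), if_neg (by omega), if_neg (by omega), if_neg (by omega)]; omega
  · iterate 8 right
    left
    rw [if_neg (by omega), if_neg (by omega), if_neg (by omega), if_neg (by omega),
      if_neg (by omega), if_neg (by omega), if_neg (by omega), if_neg (by omega)]; omega
  · iterate 9 right
    rw [if_neg (by omega), if_neg (by omega), if_neg (by omega), if_neg (by omega),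
      if_neg (by omega), if_neg (by omega), if_neg (by omega), if_neg (by omega)]; omega

theorem jdRc_two {n b1 b2 : ℕ} (h : jdVal n b1 b2) {i j k : ℕ}
    (h1 : jdRc b1 b2 i = jdRc b1 b2 j) (h2 : jdRc b1 b2 i = jdRc b1 b2 k) :
    i = j ∨ i = k ∨ j = k := by
  have hi := jdRc_cases h i
  have hj := jdRc_cases h j
  have hk := jdRc_cases h k
  unfold jdVal at h
  rcases hi with hi | hi | hi | hi | hi | hi | hi | hi | hi | hi <;> omega

theorem jdRc_free {n b1 b2 : ℕ} (h : jdVal n b1 b2) {i j : ℕ} (h0 : 0 ≤ jdRc b1 b2 i)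
    (hij : i < j) (hj0 : 0 ≤ jdRc b1 b2 j) : jdRc b1 b2 i < jdRc b1 b2 j := by
  have hi := jdRc_cases h i
  have hj := jdRc_cases h j
  unfold jdVal at h
  omega

theorem jdRc_lt {n b1 b2 : ℕ} (h : jdVal n b1 b2) {i : ℕ} (hi : i < n) :
    jdRc b1 b2 i + 4 < n := by
  have hi := jdRc_cases h i
  unfold jdVal at h
  omega

theorem jdRc_ge {n b1 b2 : ℕ} (h : jdVal n b1 b2) {i : ℕ} : -2 ≤ jdRc b1 b2 i := by
  have hi := jdRc_cases h i
  unfold jdVal at h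
  omega

theorem jdRc_surj {n b1 b2 : ℕ} (h : jdVal n b1 b2) {p : ℤ} (hp : 0 ≤ p) (hp' : p + 4 < n) :
    ∃ i, i < n ∧ jdRc b1 b2 i = p := by
  lift p to ℕ using hp
  have h0 := jdRc_cases h p
  have h2 := jdRc_cases h (p + 2)
  have h4 := jdRc_cases h (p + 4)
  unfold jdVal at h
  have : jdRc b1 b2 p = p ∨ jdRc b1 b2 (p + 2) = p ∨ jdRc b1 b2 (p + 4) = p := by
    push_cast at *
    omega
  rcases this with h | h | h
  · exact ⟨p, by omega, h⟩
  · exact ⟨p + 2, by omega, h⟩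
  · exact ⟨p + 4, by omega, h⟩

theorem jdMt_lt {n b1 b2 : ℕ} (h : jdVal n b1 b2) {i : ℕ} (hi : i < n) : jdMt b1 b2 i < n := by
  have hi := jdRc_cases h i
  unfold jdVal at h
  omega

theorem jdRc_mt {n b1 b2 : ℕ} (h : jdVal n b1 b2) (i : ℕ) :
    jdRc b1 b2 (jdMt b1 b2 i) = jdRc b1 b2 i ∧ (jdRc b1 b2 i < 0 → jdMt b1 b2 i ≠ i) := by
  have hi := jdRc_cases h i
  have hj := jdRc_cases h (jdMt b1 b2 i)
  unfold jdVal at h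
  omega

theorem jdRc_noncross {n b1 b2 : ℕ} (h : jdVal n b1 b2) {i j k l : ℕ} (hij : i < j) (hjk : j < k)
    (hkl : k < l) (h1 : jdRc b1 b2 i = jdRc b1 b2 k) (h2 : jdRc b1 b2 j = jdRc b1 b2 l) :
    False := by
  have hi := jdRc_cases h i
  have hj := jdRc_cases h j
  have hk := jdRc_cases h k
  have hl := jdRc_cases h l
  unfold jdVal at h
  rcases hi with hi | hi | hi | hi | hi | hi | hi | hi | hi | hi <;> omega

theorem jdRc_under {n b1 b2 : ℕ} (h : jdVal n b1 b2) {i j k : ℕ} (hij : i < j) (hjk : j < k)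
    (h1 : jdRc b1 b2 i = jdRc b1 b2 k) : jdRc b1 b2 j < 0 := by
  have hi := jdRc_cases h i
  have hj := jdRc_cases h j
  have hk := jdRc_cases h k
  unfold jdVal at h
  rcases hi with hi | hi | hi | hi | hi | hi | hi | hi | hi | hi <;> omega

theorem jdRc_arc {n b1 b2 : ℕ} (h : jdVal n b1 b2) {i j : ℕ} (hij : i < j)
    (h1 : jdRc b1 b2 i = jdRc b1 b2 j) : jdRc b1 b2 i < 0 := by
  have hi := jdRc_cases h i
  have hj := jdRc_cases h j
  unfold jdVal at h
  omega

theorem jdRc_closer {n b1 b2 : ℕ} (h : jdVal n b1 b2) (j : ℕ) :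
    (∃ i, i < j ∧ jdRc b1 b2 i = jdRc b1 b2 j) ↔ j = b1 ∨ j = b2 := by
  constructor
  · rintro ⟨i, hij, hr⟩
    have hi := jdRc_cases h i
    have hj := jdRc_cases h j
    unfold jdVal at h
    omega
  · intro hj
    refine ⟨jdMt b1 b2 j, ?_, (jdRc_mt h j).1⟩
    have hj := jdRc_cases h j
    unfold jdVal at h
    omega

theorem jdCov_iff {n b1 b2 : ℕ} (h : jdVal n b1 b2) (i : ℕ) :
    jdCov b1 b2 i ↔ jdRc b1 b2 i < 0 := by
  have hi := jdRc_cases h i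
  unfold jdVal at h
  unfold jdCov jdOpn
  split_ifs <;> omega

theorem jdOpn_cases {n b1 b2 : ℕ} (h : jdVal n b1 b2) :
    (b2 = b1 + 1 ∧ jdOpn b1 b2 + 2 = b1) ∨ (b1 + 2 ≤ b2 ∧ jdOpn b1 b2 + 1 = b2) := by
  unfold jdVal at h
  unfold jdOpn
  split_ifs <;> omega

/-- Explicit description of the good pairs of patterns. -/
def jdExp (b1 b2 c1 c2 : ℕ) : Prop :=
  (b2 = b1 + 1 ∧ c2 = c1 + 1 ∧ b1 ≤ c1 + 2 ∧ c1 ≤ b1 + 2) ∨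
  (b2 = b1 + 1 ∧ c1 + 2 ≤ c2 ∧ b1 ≤ c1 + 2 ∧ c2 ≤ b1 + 2 ∧ c2 ≤ c1 + 3) ∨
  (c2 = c1 + 1 ∧ b1 + 2 ≤ b2 ∧ c1 ≤ b1 + 2 ∧ b2 ≤ c1 + 2 ∧ b2 ≤ b1 + 3) ∨
  (b1 + 2 ≤ b2 ∧ c1 + 2 ≤ c2 ∧ b1 ≤ c1 + 1 ∧ c1 ≤ b1 + 1 ∧ b2 ≤ c2 + 1 ∧ c2 ≤ b2 + 1) ∨
  (b2 = b1 + 2 ∧ c1 + 1 = b1 ∧ c2 = c1 + 2) ∨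
  (c2 = c1 + 2 ∧ b1 + 1 = c1 ∧ b2 = b1 + 2)

instance (b1 b2 c1 c2 : ℕ) : Decidable (jdExp b1 b2 c1 c2) := by unfold jdExp; infer_instance

set_option maxHeartbeats 4000000 in
theorem jdExp_of_good {n b1 b2 c1 c2 : ℕ} (hb : jdVal n b1 b2) (hc : jdVal n c1 c2)
    (g : jdGood b1 b2 c1 c2) : jdExp b1 b2 c1 c2 := by
  have ob := jdOpn_cases hb
  have oc := jdOpn_cases hc
  unfold jdVal at hb hc
  obtain ⟨⟨g1, g2⟩, g3, g4⟩ := g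
  unfold jdExp
  unfold jdCov at g1 g2 g3 g4
  generalize jdOpn b1 b2 = o at *
  generalize jdOpn c1 c2 = o' at *
  rcases ob with ob | ob <;> rcases oc with oc | oc
  · clear g1 g2 g4
    have : b1 ≤ c1 + 2 ∧ c1 ≤ b1 + 2 := by omega
    exact Or.inl (by omega)
  · clear g2
    have t3 : b1 ≤ c1 + 2 ∧ c1 ≤ b1 + 2 := by clear g1 g4; omega
    have t4 : b1 ≤ c2 + 2 ∧ c2 ≤ b1 + 2 := by clear g1 g3; omega
    have t1 : ¬ (c1 + 2 = b1 ∧ c2 = b1 + 2) := by clear g3 g4; omega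
    clear g1 g3 g4
    exact Or.inr (Or.inl (by omega))
  · clear g4
    have t3 : c1 ≤ b1 + 2 ∧ b1 ≤ c1 + 2 := by clear g3 g2; omega
    have t4 : c1 ≤ b2 + 2 ∧ b2 ≤ c1 + 2 := by clear g1 g3; omega
    have t1 : ¬ (b1 + 2 = c1 ∧ b2 = c1 + 2) := by clear g1 g2; omega
    clear g1 g3 g2
    exact Or.inr (Or.inr (Or.inl (by omega)))
  · have t1 : (b1 ≤ c1 + 1 ∧ c1 ≤ b1 + 1) ∨ (b1 ≤ c2 + 1 ∧ c2 ≤ b1 + 1) := by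
      clear g2 g3 g4; omega
    have t2 : (b2 ≤ c1 + 1 ∧ c1 ≤ b2 + 1) ∨ (b2 ≤ c2 + 1 ∧ c2 ≤ b2 + 1) := by
      clear g1 g3 g4; omega
    have t3 : (b1 ≤ c1 + 1 ∧ c1 ≤ b1 + 1) ∨ (b2 ≤ c1 + 1 ∧ c1 ≤ b2 + 1) := by
      clear g2 g1 g4; omega
    have t4 : (b1 ≤ c2 + 1 ∧ c2 ≤ b1 + 1) ∨ (b2 ≤ c2 + 1 ∧ c2 ≤ b2 + 1) := by
      clear g2 g3 g1; omega
    clear g1 g2 g3 g4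
    exact Or.inr (Or.inr (Or.inr (Or.inl (by omega))))

theorem jdRc_free_cases {n b1 b2 : ℕ} (h : jdVal n b1 b2) {i : ℕ} (h0 : 0 ≤ jdRc b1 b2 i) :
    (b2 < i ∧ jdRc b1 b2 i = i - 4) ∨ (b1 < i ∧ i + 1 < b2 ∧ jdRc b1 b2 i = i - 2) ∨
    (i + 1 < b1 ∧ b1 + 2 ≤ b2 ∧ jdRc b1 b2 i = i) ∨
    (i + 2 < b1 ∧ b2 = b1 + 1 ∧ jdRc b1 b2 i = i) := by
  have := jdRc_cases h i
  omega

theorem jdMt_cases {n b1 b2 : ℕ} (h : jdVal n b1 b2) (i : ℕ) :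
    (i + 1 = b1 ∧ jdMt b1 b2 i = b1) ∨ (i = b1 ∧ jdMt b1 b2 i + 1 = b1) ∨
    (b2 = b1 + 1 ∧ i + 2 = b1 ∧ jdMt b1 b2 i = b2) ∨
    (b2 = b1 + 1 ∧ i = b2 ∧ jdMt b1 b2 i + 3 = b2) ∨
    (b1 + 2 ≤ b2 ∧ i + 1 = b2 ∧ jdMt b1 b2 i = b2) ∨
    (b1 + 2 ≤ b2 ∧ i = b2 ∧ jdMt b1 b2 i + 1 = b2) ∨
    (jdMt b1 b2 i = i ∧ (b2 < i ∨ i + 2 < b1 ∨ (b1 + 2 ≤ b2 ∧ (i + 1 < b1 ∨ b1 < i ∧ i + 1 < b2))))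
      := by
  rcases jdRc_cases h i with p | p | p | p | p | p | p | p | p | p
  · exact Or.inl (by omega)
  · exact Or.inr (Or.inl (by omega))
  · exact Or.inr (Or.inr (Or.inl (by omega)))
  · exact Or.inr (Or.inr (Or.inr (Or.inl (by omega))))
  · exact Or.inr (Or.inr (Or.inr (Or.inr (Or.inl (by omega)))))
  · exact Or.inr (Or.inr (Or.inr (Or.inr (Or.inr (Or.inl (by omega))))))
  all_goals exact Or.inr (Or.inr (Or.inr (Or.inr (Or.inr (Or.inr (by omega))))))

set_option maxHeartbeats 1600000 in
theorem jdPath {n b1 b2 c1 c2 : ℕ} (hb : jdVal n b1 b2) (hc : jdVal n c1 c2)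
    (g : jdExp b1 b2 c1 c2) {i j : ℕ} (h0 : 0 ≤ jdRc b1 b2 i)
    (hij : jdRc b1 b2 i = jdRc c1 c2 j) :
    j = i ∨ j = jdMt b1 b2 (jdMt c1 c2 i) ∨
      j = jdMt b1 b2 (jdMt c1 c2 (jdMt b1 b2 (jdMt c1 c2 i))) := by
  unfold jdExp at g
  have hif := jdRc_free_cases hb h0
  rw [hij] at h0 hif
  have hjf := jdRc_free_cases hc h0
  have hi' := jdMt_cases hc i
  have hx := jdMt_cases hb (jdMt c1 c2 i)
  have hy := jdMt_cases hc (jdMt b1 b2 (jdMt c1 c2 i))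
  have hz := jdMt_cases hb (jdMt c1 c2 (jdMt b1 b2 (jdMt c1 c2 i)))
  unfold jdVal at hb hc
  generalize jdMt b1 b2 (jdMt c1 c2 (jdMt b1 b2 (jdMt c1 c2 i))) = w at *
  generalize jdMt c1 c2 (jdMt b1 b2 (jdMt c1 c2 i)) = z at *
  generalize jdMt b1 b2 (jdMt c1 c2 i) = y at *
  generalize jdMt c1 c2 i = x at *
  generalize jdRc c1 c2 j = r at *
  clear hij
  by_cases e : j = i
  · exact Or.inl e
  right
  by_contra hcon
  have hcy : j ≠ y := fun h => hcon (Or.inl h)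
  have hcw : j ≠ w := fun h => hcon (Or.inr h)
  clear hcon
  rcases g with g | g | g | g | g | g <;> rcases hif with hif | hif | hif | hif <;>
    (try (exfalso; clear hi' hx hy hz; omega)) <;>
    rcases hjf with hjf | hjf | hjf | hjf <;> (try (exfalso; clear hi' hx hy hz; omega))
  all_goals
    rcases hi' with hi' | hi' | hi' | hi' | hi' | hi' | hi' <;>
      (try (exfalso; clear hx hy hz; omega))
  all_goals
    rcases hx with hx | hx | hx | hx | hx | hx | hx <;> (try (exfalso; clear hy hz; omega))
  all_goals
    rcases hy with hy | hy | hy | hy | hy | hy | hy <;> (try (exfalso; clear hz; omega))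
  all_goals omega

/-- Block labels of the diagram with upper pattern `b` and lower pattern `c`. -/
def jdCode {n : ℕ} (b1 b2 c1 c2 : ℕ) : PV n → ℤ
  | .inl i => jdRc b1 b2 i.val
  | .inr j => if jdRc c1 c2 j.val < 0 then jdRc c1 c2 j.val - 2 else jdRc c1 c2 j.val

/-- The diagram with upper pattern `b` and lower pattern `c`. -/
def jdMk (n b1 b2 c1 c2 : ℕ) : PElt n := Setoid.ker (jdCode b1 b2 c1 c2)

theorem jdMk_ll {n b1 b2 c1 c2 : ℕ} {i j : Fin n} :
    (jdMk n b1 b2 c1 c2).r (.inl i) (.inl j) ↔ jdRc b1 b2 i = jdRc b1 b2 j := Iff.rfl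

theorem jdMk_rr {n b1 b2 c1 c2 : ℕ} {i j : Fin n} :
    (jdMk n b1 b2 c1 c2).r (.inr i) (.inr j) ↔ jdRc c1 c2 i = jdRc c1 c2 j := by
  change jdCode b1 b2 c1 c2 (.inr i) = jdCode b1 b2 c1 c2 (.inr j) ↔ _
  unfold jdCode
  dsimp only
  split_ifs <;> omega

theorem jdMk_lr {n b1 b2 c1 c2 : ℕ} (hb : jdVal n b1 b2) {i j : Fin n} :
    (jdMk n b1 b2 c1 c2).r (.inl i) (.inr j) ↔
      0 ≤ jdRc b1 b2 i ∧ jdRc b1 b2 i = jdRc c1 c2 j := by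
  change jdCode b1 b2 c1 c2 (.inl i) = jdCode b1 b2 c1 c2 (.inr j) ↔ _
  have := jdRc_ge hb (i := i)
  unfold jdCode
  dsimp only
  split_ifs <;> omega

theorem jdMk_rl {n b1 b2 c1 c2 : ℕ} (hb : jdVal n b1 b2) {i j : Fin n} :
    (jdMk n b1 b2 c1 c2).r (.inr j) (.inl i) ↔
      0 ≤ jdRc b1 b2 i ∧ jdRc b1 b2 i = jdRc c1 c2 j := by
  rw [← jdMk_lr hb]
  exact ⟨jd_r_symm, jd_r_symm⟩

theorem jdRc_eq_free {n b1 b2 : ℕ} (h : jdVal n b1 b2) {i j : ℕ} (h0 : 0 ≤ jdRc b1 b2 i)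
    (hij : jdRc b1 b2 i = jdRc b1 b2 j) : i = j := by
  by_contra hne
  rcases Nat.lt_or_gt_of_ne hne with h1 | h1
  · have := jdRc_arc h h1 hij; omega
  · have := jdRc_arc h h1 hij.symm; omega

theorem jdMk_mem {n b1 b2 c1 c2 : ℕ} (hb : jdVal n b1 b2) (hc : jdVal n c1 c2) :
    jdMk n b1 b2 c1 c2 ∈ Jones n := by
  constructor
  · rintro ⟨w, x, y, z, h1, h2, h3, hwy, hxz, -⟩
    rcases w with w | w <;> rcases x with x | x <;> rcases y with y | y <;> rcases z with z | z <;>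
      simp only [ordIdx] at h1 h2 h3 <;> (try (exfalso; omega)) <;>
      simp only [jdMk_ll, jdMk_rr, jdMk_lr hb, jdMk_rl hb] at hwy hxz
    · exact jdRc_noncross hb h1 h2 h3 hwy hxz
    · have := jdRc_under hb h1 h2 hwy
      omega
    · have e1 := jdRc_free hb hwy.1 h1 hxz.1
      have e2 := jdRc_free hc (i := z) (j := y) (by omega) (by omega) (by omega)
      omega
    · have := jdRc_under hc (i := z) (j := y) (k := x) (by omega) (by omega) hxz.symm
      omega
    · exact jdRc_noncross hc (i := z) (j := y) (k := x) (l := w) (by omega) (by omega) (by omega)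
        hxz.symm hwy.symm
  · intro x
    apply jd_blockCard
    · rcases x with i | j
      · have hm := jdRc_mt hb i
        by_cases h0 : jdRc b1 b2 i < 0
        · refine ⟨.inl ⟨jdMt b1 b2 i, jdMt_lt hb i.2⟩, ?_, jdMk_ll.2 hm.1.symm⟩
          intro e
          rw [Sum.inl.injEq, Fin.ext_iff] at e
          exact hm.2 h0 e
        · obtain ⟨j, hj, e⟩ := jdRc_surj hc (p := jdRc b1 b2 i) (by omega) (jdRc_lt hb i.2)
          exact ⟨.inr ⟨j, hj⟩, by simp, (jdMk_lr hb).2 ⟨by omega, e.symm⟩⟩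
      · have hm := jdRc_mt hc j
        by_cases h0 : jdRc c1 c2 j < 0
        · refine ⟨.inr ⟨jdMt c1 c2 j, jdMt_lt hc j.2⟩, ?_, jdMk_rr.2 hm.1.symm⟩
          intro e
          rw [Sum.inr.injEq, Fin.ext_iff] at e
          exact hm.2 h0 e
        · obtain ⟨i, hi, e⟩ := jdRc_surj hb (p := jdRc c1 c2 j) (by omega) (jdRc_lt hc j.2)
          exact ⟨.inl ⟨i, hi⟩, by simp, (jdMk_rl hb).2 ⟨by simp only [e]; omega, e⟩⟩
    · intro y z hy hz
      rcases x with x | x <;> rcases y with y | y <;> rcases z with z | z <;>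
        simp only [jdMk_ll, jdMk_rr, jdMk_lr hb, jdMk_rl hb] at hy hz <;>
        simp only [Sum.inl.injEq, Sum.inr.injEq, Fin.ext_iff, reduceCtorEq, false_or, or_false]
      · exact jdRc_two hb hy hz
      · exact jdRc_eq_free hb hz.1 hy
      · exact jdRc_eq_free hb hy.1 hz
      · exact jdRc_eq_free hc (by omega) (hy.2.symm.trans hz.2)
      · exact jdRc_eq_free hb hy.1 (hy.2.trans hz.2.symm)
      · exact jdRc_eq_free hc (by omega) hz
      · exact jdRc_eq_free hc (by omega) hy
      · exact jdRc_two hc hy hz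

theorem jdMk_idem {n b1 b2 c1 c2 : ℕ} (hb : jdVal n b1 b2) (hc : jdVal n c1 c2)
    (g : jdExp b1 b2 c1 c2) : pmul (jdMk n b1 b2 c1 c2) (jdMk n b1 b2 c1 c2) = jdMk n b1 b2 c1 c2 := by
  rw [jd_idem_iff (jdMk_mem hb hc)]
  intro i j hij
  rw [jdMk_lr hb] at hij
  have B : ∀ k : Fin n, gconn (jdMk n b1 b2 c1 c2) k ⟨jdMt b1 b2 k, jdMt_lt hb k.2⟩ := fun k =>
    jd_gconn_low (jdMk_ll.2 (jdRc_mt hb k).1.symm)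
  have C : ∀ k : Fin n, gconn (jdMk n b1 b2 c1 c2) k ⟨jdMt c1 c2 k, jdMt_lt hc k.2⟩ := fun k =>
    jd_gconn_up (jdMk_rr.2 (jdRc_mt hc k).1.symm)
  rcases jdPath hb hc g hij.1 hij.2 with e | e | e
  · rw [Fin.ext e]; exact jd_gconn_refl _ _
  · have : j = ⟨_, jdMt_lt hb (jdMt_lt hc i.2)⟩ := Fin.ext e
    rw [this]
    exact jd_gconn_trans (C _) (B _)
  · have : j = ⟨_, jdMt_lt hb (jdMt_lt hc (jdMt_lt hb (jdMt_lt hc i.2)))⟩ := Fin.ext e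
    rw [this]
    exact jd_gconn_trans (C _) (jd_gconn_trans (B _) (jd_gconn_trans (C _) (B _)))

theorem jdRc_card {n b1 b2 : ℕ} (h : jdVal n b1 b2) :
    Nat.card {i : Fin n // 0 ≤ jdRc b1 b2 i} = n - 4 := by
  rw [← Nat.card_fin (n - 4)]
  refine Nat.card_eq_of_bijective (fun i => ⟨(jdRc b1 b2 i.1).toNat, ?_⟩) ⟨?_, ?_⟩
  · have := jdRc_lt h i.1.2
    have := i.2
    omega
  · intro i j e
    have hi := i.2
    have hj := j.2
    simp only [Fin.mk.injEq] at e
    exact Subtype.ext (Fin.ext (jdRc_eq_free h hi (by omega)))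
  · intro p
    obtain ⟨i, hi, e⟩ := jdRc_surj h (p := (p.1 : ℤ)) (by omega) (by have := p.2; omega)
    refine ⟨⟨⟨i, hi⟩, by simp [e]⟩, ?_⟩
    simp [e]

theorem jdMk_paths {n b1 b2 c1 c2 : ℕ} (hb : jdVal n b1 b2) (hc : jdVal n c1 c2)
    (g : jdExp b1 b2 c1 c2) : numPaths (jdMk n b1 b2 c1 c2) = n - 4 := by
  rw [jd_numPaths (jdMk_mem hb hc) (jdMk_idem hb hc g), ← jdRc_card hb]
  congr 1
  congr 1
  ext i
  rw [jd_not_low (jdMk_mem hb hc)]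
  constructor
  · rintro ⟨j, hj⟩
    exact ((jdMk_lr hb).1 hj).1
  · intro h0
    obtain ⟨j, hj, e⟩ := jdRc_surj hc h0 (jdRc_lt hb i.2)
    exact ⟨⟨j, hj⟩, (jdMk_lr hb).2 ⟨h0, e.symm⟩⟩

theorem jdMk_inj {n b1 b2 c1 c2 b1' b2' c1' c2' : ℕ} (hb : jdVal n b1 b2) (hc : jdVal n c1 c2)
    (hb' : jdVal n b1' b2') (hc' : jdVal n c1' c2')
    (e : jdMk n b1 b2 c1 c2 = jdMk n b1' b2' c1' c2') :
    b1 = b1' ∧ b2 = b2' ∧ c1 = c1' ∧ c2 = c2' := by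
  have key : ∀ {b1 b2 b1' b2' : ℕ}, jdVal n b1 b2 → jdVal n b1' b2' →
      (∀ i j : Fin n, jdRc b1 b2 i = jdRc b1 b2 j → jdRc b1' b2' i = jdRc b1' b2' j) →
      (b1 = b1' ∨ b1 = b2') ∧ (b2 = b1' ∨ b2 = b2') := by
    intro b1 b2 b1' b2' h h' t
    have s : ∀ j, j < n → (j = b1 ∨ j = b2) → (j = b1' ∨ j = b2') := by
      intro j hj hjb
      obtain ⟨i, hij, hr⟩ := (jdRc_closer h j).2 hjb
      exact (jdRc_closer h' j).1 ⟨i, hij, t ⟨i, hij.trans hj⟩ ⟨j, hj⟩ hr⟩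
    unfold jdVal at h
    exact ⟨s b1 (by omega) (Or.inl rfl), s b2 (by omega) (Or.inr rfl)⟩
  have k1 := key hb hb' fun i j h => jdMk_ll.1 (e ▸ jdMk_ll.2 h)
  have k2 := key hc hc' fun i j h => jdMk_rr.1 (e ▸ jdMk_rr.2 h)
  unfold jdVal at hb hc hb' hc'
  omega

theorem jd_row {n : ℕ} (hn : 5 ≤ n) (s : Setoid (Fin n))
    (H1 : ∀ i j k, s.r i j → s.r i k → i = j ∨ i = k ∨ j = k)
    (H2 : ∀ i k j, i < k → k < j → s.r i j → ∃ l, l ≠ k ∧ i < l ∧ l < j ∧ s.r k l)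
    (H3 : Nat.card {i : Fin n // ¬ ∃ j, i ≠ j ∧ s.r i j} = n - 4) :
    ∃ b1 b2, jdVal n b1 b2 ∧ (∀ i j : Fin n, s.r i j → jdRc b1 b2 i = jdRc b1 b2 j) ∧
      ∀ i : Fin n, (∃ j, i ≠ j ∧ s.r i j) ↔ jdRc b1 b2 i < 0 := by
  classical
  have hcard : (Finset.univ.filter fun i : Fin n => ∃ j, i ≠ j ∧ s.r i j).card = 4 := by
    have h1 := Finset.card_filter_add_card_filter_not (s := (Finset.univ : Finset (Fin n)))
      (fun i : Fin n => ∃ j, i ≠ j ∧ s.r i j)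
    rw [Nat.card_eq_fintype_card, Fintype.card_subtype] at H3
    rw [H3, Finset.card_univ, Fintype.card_fin] at h1
    omega
  have hP : ∃ p0 p1 p2 p3 : Fin n, p0 < p1 ∧ p1 < p2 ∧ p2 < p3 ∧
      ∀ i : Fin n, (∃ j, i ≠ j ∧ s.r i j) ↔ i = p0 ∨ i = p1 ∨ i = p2 ∨ i = p3 := by
    let f := Finset.orderEmbOfFin _ hcard
    refine ⟨f 0, f 1, f 2, f 3, f.strictMono (by decide), f.strictMono (by decide),
      f.strictMono (by decide), fun i => ?_⟩
    have hr := Finset.range_orderEmbOfFin _ hcard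
    have : i ∈ Set.range f ↔ ∃ j, i ≠ j ∧ s.r i j := by
      show i ∈ Set.range (Finset.orderEmbOfFin _ hcard) ↔ _
      rw [hr]; simp
    rw [← this]
    constructor
    · rintro ⟨k, rfl⟩
      fin_cases k <;> simp
    · rintro (h | h | h | h) <;> exact ⟨_, h.symm⟩
  obtain ⟨p0, p1, p2, p3, h01, h12, h23, hC⟩ := hP
  -- gap between paired points is covered
  have gap : ∀ i k j : Fin n, i < k → k < j → s.r i j →
      k = p0 ∨ k = p1 ∨ k = p2 ∨ k = p3 := by
    intro i k j hik hkj h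
    obtain ⟨l, hl, -, -, hs⟩ := H2 i k j hik hkj h
    exact (hC k).1 ⟨l, hl.symm, hs⟩
  have mate : ∀ i, (i = p0 ∨ i = p1 ∨ i = p2 ∨ i = p3) →
      ∃ j, i ≠ j ∧ s.r i j ∧ (j = p0 ∨ j = p1 ∨ j = p2 ∨ j = p3) := by
    intro i hi
    obtain ⟨j, hj, hs⟩ := (hC i).2 hi
    exact ⟨j, hj, hs, (hC j).1 ⟨i, hj.symm, s.iseqv.symm hs⟩⟩
  have n02 : ¬ s.r p0 p2 := by
    intro h
    obtain ⟨l, hl, h1, h2, hs⟩ := H2 p0 p1 p2 h01 h12 h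
    have := (hC l).1 ⟨p1, hl, s.iseqv.symm hs⟩
    rcases this with e | e | e | e <;> subst e <;> first | exact hl rfl | (simp only [Fin.lt_def] at *; omega)
  have adj : ∀ i j : Fin n, i < j → s.r i j →
      (∀ k, k = p0 ∨ k = p1 ∨ k = p2 ∨ k = p3 → k ≤ i ∨ j ≤ k) → j.val = i.val + 1 := by
    intro i j hij h hk
    by_contra hne
    have hlt : i.val + 1 < n := by have := j.2; have := Fin.lt_def.1 hij; omega
    have a1 : i < (⟨i.val + 1, hlt⟩ : Fin n) := by rw [Fin.lt_def]; simp
    have a2 : (⟨i.val + 1, hlt⟩ : Fin n) < j := by rw [Fin.lt_def] at hij ⊢; simp only; omega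
    rcases hk _ (gap i _ j a1 a2 h) with h3 | h3
    · exact absurd h3 (not_le.2 a1)
    · exact absurd h3 (not_le.2 a2)
  have sym : ∀ {i j}, s.r i j → s.r j i := fun h => s.iseqv.symm h
  have main : (s.r p0 p1 ∧ s.r p2 p3) ∨ (s.r p0 p3 ∧ s.r p1 p2) := by
    obtain ⟨j, hj, hs, e⟩ := mate p0 (by simp)
    rcases e with e | e | e | e
    · exact absurd e.symm hj
    · subst e
      obtain ⟨k, hk, hs', e⟩ := mate p2 (by simp)
      rcases e with e | e | e | e
      · subst e; exact absurd (sym hs') n02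
      · subst e
        exact absurd (s.iseqv.trans hs (sym hs')) n02
      · exact absurd e.symm hk
      · subst e; exact Or.inl ⟨hs, hs'⟩
    · subst e; exact absurd hs n02
    · subst e
      obtain ⟨k, hk, hs', e⟩ := mate p1 (by simp)
      rcases e with e | e | e | e
      · subst e
        rcases H1 _ _ _ hs (sym hs') with e | e | e
        · exact absurd e (ne_of_lt (h01.trans (h12.trans h23)))
        · exact absurd e (ne_of_lt h01)
        · exact absurd e.symm (ne_of_lt (h12.trans h23))
      · exact absurd e.symm hk
      · subst e; exact Or.inr ⟨hs, hs'⟩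
      · subst e
        have := s.iseqv.trans hs (sym hs')
        rcases H1 _ _ _ hs this with e | e | e
        · exact absurd e (ne_of_lt (h01.trans (h12.trans h23)))
        · exact absurd e (ne_of_lt h01)
        · exact absurd e.symm (ne_of_lt (h12.trans h23))
  have q0 := p0.2
  have q3 := p3.2
  have fin : ∀ b1 b2, jdVal n b1 b2 →
      (∀ i : Fin n, (i = p0 ∨ i = p1 ∨ i = p2 ∨ i = p3) ↔ jdRc b1 b2 i < 0) →
      (∀ i j, (i = p0 ∨ i = p1 ∨ i = p2 ∨ i = p3) → (j = p0 ∨ j = p1 ∨ j = p2 ∨ j = p3) →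
        s.r i j → jdRc b1 b2 i = jdRc b1 b2 j) →
      ∃ b1 b2, jdVal n b1 b2 ∧ (∀ i j : Fin n, s.r i j → jdRc b1 b2 i = jdRc b1 b2 j) ∧
      ∀ i : Fin n, (∃ j, i ≠ j ∧ s.r i j) ↔ jdRc b1 b2 i < 0 := by
    intro b1 b2 hv h1 h2
    refine ⟨b1, b2, hv, ?_, fun i => (hC i).trans (h1 i)⟩
    intro i j hij
    by_cases e : i = j
    · rw [e]
    · exact h2 i j ((hC i).1 ⟨j, e, hij⟩) ((hC j).1 ⟨i, Ne.symm e, sym hij⟩) hij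
  rcases main with ⟨m1, m2⟩ | ⟨m1, m2⟩
  · have e1 := adj p0 p1 h01 m1 (by
      rintro k (rfl | rfl | rfl | rfl) <;> simp only [Fin.lt_def, Fin.le_def] at * <;> omega)
    have e2 := adj p2 p3 h23 m2 (by
      rintro k (rfl | rfl | rfl | rfl) <;> simp only [Fin.lt_def, Fin.le_def] at * <;> omega)
    simp only [Fin.lt_def] at h01 h12 h23
    have hv : jdVal n p1 p3 := by unfold jdVal; omega
    have c0 : jdRc p1 p3 p0 = -1 := by have := jdRc_cases hv p0; omega
    have c1 : jdRc p1 p3 p1 = -1 := by have := jdRc_cases hv p1; omega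
    have c2 : jdRc p1 p3 p2 = -2 := by have := jdRc_cases hv p2; omega
    have c3 : jdRc p1 p3 p3 = -2 := by have := jdRc_cases hv p3; omega
    have no : ∀ u v : Fin n, (u = p0 ∨ u = p1) → (v = p2 ∨ v = p3) → ¬ s.r u v := by
      intro u v hu hv h
      apply n02
      have a1 : s.r p0 u := by
        rcases hu with rfl | rfl
        · exact s.iseqv.refl _
        · exact m1
      have a2 : s.r v p2 := by
        rcases hv with rfl | rfl
        · exact s.iseqv.refl _
        · exact sym m2
      exact s.iseqv.trans a1 (s.iseqv.trans h a2)
    refine fin p1 p3 hv ?_ ?_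
    · intro i
      have := jdRc_cases hv i
      simp only [Fin.ext_iff]
      clear * - this e1 e2 h01 h12 h23
      omega
    · rintro i j (rfl | rfl | rfl | rfl) (rfl | rfl | rfl | rfl) h <;>
        first
        | (rw [c0]; done)
        | (simp only [c0, c1, c2, c3]; done)
        | exact absurd h (no _ _ (by simp) (by simp))
        | exact absurd (sym h) (no _ _ (by simp) (by simp))
  · have e1 := adj p1 p2 h12 m2 (by
      rintro k (rfl | rfl | rfl | rfl) <;> simp only [Fin.lt_def, Fin.le_def] at * <;> omega)
    have adj2 : p1.val = p0.val + 1 ∧ p3.val = p2.val + 1 := by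
      constructor
      · by_contra hne
        simp only [Fin.lt_def] at h01 h12 h23
        have := gap p0 ⟨p0.val + 1, by omega⟩ p3 (by simp [Fin.lt_def])
          (by simp only [Fin.lt_def]; omega) m1
        simp only [Fin.ext_iff] at this
        omega
      · by_contra hne
        simp only [Fin.lt_def] at h01 h12 h23
        have := gap p0 ⟨p2.val + 1, by omega⟩ p3 (by simp only [Fin.lt_def]; omega)
          (by simp only [Fin.lt_def]; omega) m1
        simp only [Fin.ext_iff] at this
        omega
    obtain ⟨e0, e2⟩ := adj2
    simp only [Fin.lt_def] at h01 h12 h23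
    have hv : jdVal n p2 p3 := by unfold jdVal; omega
    have c0 : jdRc p2 p3 p0 = -2 := by have := jdRc_cases hv p0; omega
    have c1 : jdRc p2 p3 p1 = -1 := by have := jdRc_cases hv p1; omega
    have c2 : jdRc p2 p3 p2 = -1 := by have := jdRc_cases hv p2; omega
    have c3 : jdRc p2 p3 p3 = -2 := by have := jdRc_cases hv p3; omega
    have no : ∀ u v : Fin n, (u = p0 ∨ u = p3) → (v = p1 ∨ v = p2) → ¬ s.r u v := by
      intro u v hu hv h
      apply n02
      have a1 : s.r p0 u := by
        rcases hu with rfl | rfl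
        · exact s.iseqv.refl _
        · exact m1
      have a2 : s.r v p2 := by
        rcases hv with rfl | rfl
        · exact m2
        · exact s.iseqv.refl _
      exact s.iseqv.trans a1 (s.iseqv.trans h a2)
    refine fin p2 p3 hv ?_ ?_
    · intro i
      have := jdRc_cases hv i
      simp only [Fin.ext_iff]
      clear * - this e1 e2 e0 h01 h12 h23
      omega
    · rintro i j (rfl | rfl | rfl | rfl) (rfl | rfl | rfl | rfl) h <;>
        first
        | (rw [c0]; done)
        | (simp only [c0, c1, c2, c3]; done)
        | exact absurd h (no _ _ (by simp) (by simp))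
        | exact absurd (sym h) (no _ _ (by simp) (by simp))

theorem jd_planar {n : ℕ} {a : PElt n} (ha : a ∈ Jones n) {w x y z : PV n}
    (h1 : ordIdx n w < ordIdx n x) (h2 : ordIdx n x < ordIdx n y)
    (h3 : ordIdx n y < ordIdx n z) (hwy : a.r w y) (hxz : a.r x z) : False := by
  apply ha.1
  refine ⟨w, x, y, z, h1, h2, h3, hwy, hxz, fun hwx => ?_⟩
  rcases jd_J1 ha hwx hwy with e | e | e
  · subst e; exact lt_irrefl _ h1
  · subst e; exact lt_irrefl _ (h1.trans h2)
  · subst e; exact lt_irrefl _ h2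

theorem jd_trans_le {n b1 b2 c1 c2 : ℕ} (hb : jdVal n b1 b2) (hc : jdVal n c1 c2)
    (T : Fin n → Fin n → Prop) (T1 : ∀ i j, T i j → 0 ≤ jdRc b1 b2 i)
    (T2 : ∀ i j, T i j → 0 ≤ jdRc c1 c2 j)
    (T3 : ∀ i : Fin n, 0 ≤ jdRc b1 b2 i → ∃ j, T i j)
    (T4 : ∀ i j i' j', T i j → T i' j' → i < i' → j < j') :
    ∀ i j, T i j → jdRc b1 b2 i ≤ jdRc c1 c2 j := by
  have key : ∀ p : ℕ, ∀ i j, T i j → jdRc b1 b2 i = p → (p : ℤ) ≤ jdRc c1 c2 j := by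
    intro p
    induction p with
    | zero => intro i j h _; exact_mod_cast T2 i j h
    | succ p ih =>
      intro i j h e
      push_cast at e ⊢
      obtain ⟨k, hk, ek⟩ := jdRc_surj hb (p := (p : ℤ)) (by omega)
        (by have := jdRc_lt hb i.2; omega)
      obtain ⟨l, hl⟩ := T3 ⟨k, hk⟩ (by simp only; omega)
      have h1 := ih _ _ hl ek
      have hlt : k < i.val := by
        by_contra hcon
        rcases Nat.lt_or_eq_of_le (Nat.le_of_not_lt hcon) with h2 | h2
        · have := jdRc_free hb (T1 i j h) h2 (by omega)
          omega
        · rw [← h2] at ek; omega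
      have h2 := T4 _ _ _ _ hl h hlt
      have := jdRc_free hc (T2 _ _ hl) (Fin.lt_def.1 h2) (T2 _ _ h)
      omega
  intro i j h
  have h0 := T1 i j h
  have := key (jdRc b1 b2 i).toNat i j h (by omega)
  omega

theorem jd_card_free {n : ℕ} {a : PElt n} (ha : a ∈ Jones n) :
    Nat.card {i : Fin n // ¬ hasUp a i} = Nat.card {i : Fin n // ¬ hasLow a i} := by
  have h1 : ∀ j : {i : Fin n // ¬ hasUp a i}, ∃ i : {i : Fin n // ¬ hasLow a i},
      a.r (.inl i.1) (.inr j.1) := by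
    intro j
    obtain ⟨i, hi⟩ := (jd_not_up ha j.1).1 j.2
    exact ⟨⟨i, (jd_not_low ha i).2 ⟨_, hi⟩⟩, hi⟩
  choose f hf using h1
  refine Nat.card_eq_of_bijective f ⟨?_, ?_⟩
  · intro j j' e
    have h := hf j
    have h' := hf j'
    rw [← e] at h'
    rcases jd_J1 ha h h' with e | e | e
    · exact absurd e (by simp)
    · exact absurd e (by simp)
    · exact Subtype.ext (by simpa using e)
  · intro i
    obtain ⟨j, hj⟩ := (jd_not_low ha i.1).1 i.2
    refine ⟨⟨j, (jd_not_up ha j).2 ⟨_, hj⟩⟩, ?_⟩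
    have h := hf ⟨j, (jd_not_up ha j).2 ⟨_, hj⟩⟩
    rcases jd_J1 ha (jd_r_symm h) (jd_r_symm hj) with e | e | e
    · exact absurd e (by simp)
    · exact absurd e (by simp)
    · exact Subtype.ext (by simpa using e)

theorem jd_surj {n : ℕ} (hn : 5 ≤ n) {a : PElt n} (ha : a ∈ Jones n) (hid : pmul a a = a)
    (hp : numPaths a = n - 4) : ∃ b1 b2 c1 c2, jdVal n b1 b2 ∧ jdVal n c1 c2 ∧
      jdExp b1 b2 c1 c2 ∧ jdMk n b1 b2 c1 c2 = a := by
  rw [jd_numPaths ha hid] at hp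
  have inlInj : ∀ {i j : Fin n}, (Sum.inl i : PV n) = Sum.inl j → i = j := fun h => by simpa using h
  have inrInj : ∀ {i j : Fin n}, (Sum.inr i : PV n) = Sum.inr j → i = j := fun h => by simpa using h
  obtain ⟨b1, b2, hb, rb, cb⟩ := jd_row hn (Setoid.comap (Sum.inl : Fin n → PV n) a)
    (by
      intro i j k h h'
      rcases jd_J1 ha (x := .inl i) (y := .inl j) (z := .inl k) h h' with e | e | e
      · exact Or.inl (inlInj e)
      · exact Or.inr (Or.inl (inlInj e))
      · exact Or.inr (Or.inr (inlInj e)))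
    (by
      intro i k j hik hkj h
      change a.r (.inl i) (.inl j) at h
      obtain ⟨y, hy, hr⟩ := jd_J2 ha (.inl k)
      rcases y with l | l
      · have hlk : l ≠ k := fun e => hy (by rw [e])
        refine ⟨l, hlk, ?_, ?_, hr⟩
        · by_contra hcon
          rcases lt_or_eq_of_le (not_lt.1 hcon) with h1 | h1
          · exact jd_planar ha (w := .inl l) (x := .inl i) (y := .inl k) (z := .inl j)
              h1 hik hkj (jd_r_symm hr) h
          · subst h1
            rcases jd_J1 ha h (jd_r_symm hr) with e | e | e
            · exact absurd (inlInj e) (ne_of_lt (hik.trans hkj))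
            · exact absurd (inlInj e) (ne_of_lt hik)
            · exact absurd (inlInj e).symm (ne_of_lt hkj)
        · by_contra hcon
          rcases lt_or_eq_of_le (not_lt.1 hcon) with h1 | h1
          · exact jd_planar ha (w := .inl i) (x := .inl k) (y := .inl j) (z := .inl l)
              hik hkj h1 h hr
          · subst h1
            rcases jd_J1 ha (jd_r_symm h) (jd_r_symm hr) with e | e | e
            · exact absurd (inlInj e).symm (ne_of_lt (hik.trans hkj))
            · exact absurd (inlInj e).symm (ne_of_lt hkj)
            · exact absurd (inlInj e) (ne_of_lt hik)
      · exfalso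
        exact jd_planar ha (w := .inl i) (x := .inl k) (y := .inl j) (z := .inr l)
          hik hkj (by simp only [ordIdx]; omega) h hr)
    hp
  obtain ⟨c1, c2, hc, rc, cc⟩ := jd_row hn (Setoid.comap (Sum.inr : Fin n → PV n) a)
    (by
      intro i j k h h'
      rcases jd_J1 ha (x := .inr i) (y := .inr j) (z := .inr k) h h' with e | e | e
      · exact Or.inl (inrInj e)
      · exact Or.inr (Or.inl (inrInj e))
      · exact Or.inr (Or.inr (inrInj e)))
    (by
      intro i k j hik hkj h
      change a.r (.inr i) (.inr j) at h
      have ord : ∀ {u v : Fin n}, u < v → ordIdx n (.inr v) < ordIdx n (.inr u) := by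
        intro u v huv
        simp only [ordIdx]
        have := Fin.lt_def.1 huv
        omega
      obtain ⟨y, hy, hr⟩ := jd_J2 ha (.inr k)
      rcases y with l | l
      · exfalso
        exact jd_planar ha (w := .inl l) (x := .inr j) (y := .inr k) (z := .inr i)
          (by simp only [ordIdx]; omega) (ord hkj) (ord hik) (jd_r_symm hr) (jd_r_symm h)
      · have hlk : l ≠ k := fun e => hy (by rw [e])
        refine ⟨l, hlk, ?_, ?_, hr⟩
        · by_contra hcon
          rcases lt_or_eq_of_le (not_lt.1 hcon) with h1 | h1
          · exact jd_planar ha (w := .inr j) (x := .inr k) (y := .inr i) (z := .inr l)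
              (ord hkj) (ord hik) (ord h1) (jd_r_symm h) hr
          · subst h1
            rcases jd_J1 ha h (jd_r_symm hr) with e | e | e
            · exact absurd (inrInj e) (ne_of_lt (hik.trans hkj))
            · exact absurd (inrInj e) (ne_of_lt hik)
            · exact absurd (inrInj e).symm (ne_of_lt hkj)
        · by_contra hcon
          rcases lt_or_eq_of_le (not_lt.1 hcon) with h1 | h1
          · exact jd_planar ha (w := .inr l) (x := .inr j) (y := .inr k) (z := .inr i)
              (ord h1) (ord hkj) (ord hik) (jd_r_symm hr) (jd_r_symm h)
          · subst h1
            rcases jd_J1 ha (jd_r_symm h) (jd_r_symm hr) with e | e | e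
            · exact absurd (inrInj e).symm (ne_of_lt (hik.trans hkj))
            · exact absurd (inrInj e).symm (ne_of_lt hkj)
            · exact absurd (inrInj e) (ne_of_lt hik))
    ((jd_card_free ha).trans hp)
  have cb' : ∀ i : Fin n, hasLow a i ↔ jdRc b1 b2 i < 0 := cb
  have cc' : ∀ i : Fin n, hasUp a i ↔ jdRc c1 c2 i < 0 := cc
  have fb : ∀ i : Fin n, (∃ j, a.r (.inl i) (.inr j)) ↔ 0 ≤ jdRc b1 b2 i := fun i => by
    rw [← jd_not_low ha, cb', not_lt]
  have fc : ∀ j : Fin n, (∃ i, a.r (.inl i) (.inr j)) ↔ 0 ≤ jdRc c1 c2 j := fun i => by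
    rw [← jd_not_up ha, cc', not_lt]
  have mono : ∀ i j i' j', a.r (.inl i) (.inr j) → a.r (.inl i') (.inr j') → i < i' → j < j' := by
    intro i j i' j' h h' hi
    by_contra hcon
    rcases lt_or_eq_of_le (not_lt.1 hcon) with h1 | h1
    · refine jd_planar ha (w := .inl i) (x := .inl i') (y := .inr j) (z := .inr j') hi
        (by simp only [ordIdx]; omega) ?_ h h'
      simp only [ordIdx]
      have := Fin.lt_def.1 h1
      omega
    · subst h1
      rcases jd_J1 ha (jd_r_symm h) (jd_r_symm h') with e | e | e
      · exact absurd e (by simp)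
      · exact absurd e (by simp)
      · exact absurd (inlInj e) (ne_of_lt hi)
  have mono' : ∀ i j i' j', a.r (.inl i) (.inr j) → a.r (.inl i') (.inr j') → j < j' → i < i' := by
    intro i j i' j' h h' hj
    by_contra hcon
    rcases lt_or_eq_of_le (not_lt.1 hcon) with h1 | h1
    · exact absurd (mono _ _ _ _ h' h h1) (not_lt.2 hj.le)
    · subst h1
      rcases jd_J1 ha h h' with e | e | e
      · exact absurd e (by simp)
      · exact absurd e (by simp)
      · exact absurd (inrInj e) (ne_of_lt hj)
  have t1 := jd_trans_le hb hc (fun i j => a.r (.inl i) (.inr j)) (fun i j h => (fb i).1 ⟨j, h⟩)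
    (fun i j h => (fc j).1 ⟨i, h⟩) (fun i h => (fb i).2 h) mono
  have t2 := jd_trans_le hc hb (fun j i => a.r (.inl i) (.inr j)) (fun j i h => (fc j).1 ⟨i, h⟩)
    (fun j i h => (fb i).1 ⟨j, h⟩) (fun j h => (fc j).2 h) (fun j i j' i' h h' => mono' i j i' j' h h')
  have tr : ∀ i j, a.r (.inl i) (.inr j) → (jdMk n b1 b2 c1 c2).r (.inl i) (.inr j) := by
    intro i j h
    exact (jdMk_lr hb).2 ⟨(fb i).1 ⟨j, h⟩, le_antisymm (t1 i j h) (t2 j i h)⟩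
  have eq : a = jdMk n b1 b2 c1 c2 := by
    refine jd_eq_of_le ha (jdMk_mem hb hc) ?_
    rintro (x | x) (y | y) h
    · exact jdMk_ll.2 (rb x y h)
    · exact tr _ _ h
    · exact jd_r_symm (tr _ _ (jd_r_symm h))
    · exact jdMk_rr.2 (rc x y h)
  refine ⟨b1, b2, c1, c2, hb, hc, jdExp_of_good hb hc ?_, eq.symm⟩
  have ob := jdOpn_cases hb
  have oc := jdOpn_cases hc
  have low : ∀ x y : ℕ, x < n → y < n → x ≠ y → jdRc b1 b2 x = jdRc b1 b2 y →
      jdCov c1 c2 x ∨ jdCov c1 c2 y := by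
    intro x y hx hy hne e
    have h := jd_touch_low ha hid (x := ⟨x, hx⟩) (y := ⟨y, hy⟩)
      ⟨by simpa using hne, by rw [eq]; exact jdMk_ll.2 e⟩
    rw [cc', cc'] at h
    rwa [jdCov_iff hc, jdCov_iff hc]
  have up : ∀ x y : ℕ, x < n → y < n → x ≠ y → jdRc c1 c2 x = jdRc c1 c2 y →
      jdCov b1 b2 x ∨ jdCov b1 b2 y := by
    intro x y hx hy hne e
    have h := jd_touch_up ha hid (x := ⟨x, hx⟩) (y := ⟨y, hy⟩)
      ⟨by simpa using hne, by rw [eq]; exact jdMk_rr.2 e⟩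
    rw [cb', cb'] at h
    rwa [jdCov_iff hb, jdCov_iff hb]
  have arcs : ∀ {b1 b2 : ℕ}, jdVal n b1 b2 → jdRc b1 b2 (b1 - 1) = jdRc b1 b2 b1 ∧
      jdRc b1 b2 (jdOpn b1 b2) = jdRc b1 b2 b2 := by
    intro b1 b2 hb
    unfold jdRc
    unfold jdVal at hb
    unfold jdOpn
    constructor
    · simp
    · split_ifs <;> omega
  have vb := hb
  have vc := hc
  unfold jdVal at vb vc
  refine ⟨⟨low _ _ (by omega) (by omega) (by omega) (arcs hb).1,
    low _ _ (by omega) (by omega) (by omega) (arcs hb).2⟩,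
    ⟨up _ _ (by omega) (by omega) (by omega) (arcs hc).1,
    up _ _ (by omega) (by omega) (by omega) (arcs hc).2⟩⟩

/-- Parameters of the rank `n - 4` idempotents. -/
def jdQ (n : ℕ) : Finset (ℕ × ℕ × ℕ × ℕ) :=
  (Finset.range n ×ˢ Finset.range n ×ˢ Finset.range n ×ˢ Finset.range n).filter fun q =>
    jdVal n q.1 q.2.1 ∧ jdVal n q.2.2.1 q.2.2.2 ∧ jdExp q.1 q.2.1 q.2.2.1 q.2.2.2

/-- The parameters whose largest entry is `N`. -/
def jdS (N : ℕ) : Finset (ℕ × ℕ × ℕ × ℕ) :=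
  (jdQ (N + 1)).filter fun q => q.2.1 = N ∨ q.2.2.2 = N

theorem jdQ_mem {n b1 b2 c1 c2 : ℕ} : (b1, b2, c1, c2) ∈ jdQ n ↔
    jdVal n b1 b2 ∧ jdVal n c1 c2 ∧ jdExp b1 b2 c1 c2 := by
  unfold jdQ jdVal
  simp only [Finset.mem_filter, Finset.mem_product, Finset.mem_range]
  constructor
  · exact fun h => h.2
  · intro h
    refine ⟨?_, h⟩
    obtain ⟨h1, h2, -⟩ := h
    omega

theorem jdS_mem {N b1 b2 c1 c2 : ℕ} : (b1, b2, c1, c2) ∈ jdS N ↔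
    (jdVal (N + 1) b1 b2 ∧ jdVal (N + 1) c1 c2 ∧ jdExp b1 b2 c1 c2) ∧ (b2 = N ∨ c2 = N) := by
  unfold jdS
  rw [Finset.mem_filter, jdQ_mem]

theorem jdQ_succ (n : ℕ) : (jdQ (n + 1)).card = (jdQ n).card + (jdS n).card := by
  rw [← Finset.card_union_of_disjoint]
  · congr 1
    ext ⟨b1, b2, c1, c2⟩
    rw [Finset.mem_union, jdQ_mem, jdQ_mem, jdS_mem]
    unfold jdVal
    constructor
    · rintro ⟨h1, h2, h3⟩
      by_cases h : b2 = n ∨ c2 = n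
      · exact Or.inr ⟨⟨h1, h2, h3⟩, h⟩
      · exact Or.inl ⟨by omega, by omega, h3⟩
    · rintro (⟨h1, h2, h3⟩ | ⟨⟨h1, h2, h3⟩, h⟩)
      · exact ⟨by omega, by omega, h3⟩
      · exact ⟨by omega, by omega, h3⟩
  · rw [Finset.disjoint_left]
    rintro ⟨b1, b2, c1, c2⟩ h1 h2
    rw [jdQ_mem] at h1
    rw [jdS_mem] at h2
    have := h1.1
    have := h1.2.1
    have := h2.2
    unfold jdVal at *
    omega

/-- The new parameters in `jdS (N + 1)`. -/
def jdNine (N : ℕ) : Finset (ℕ × ℕ × ℕ × ℕ) :=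
  {(1, N + 1, 1, N + 1), (1, N, 1, N + 1), (1, N + 1, 1, N),
   (1, N + 1, 2, N + 1), (1, N, 2, N + 1), (1, N + 1, 2, N),
   (2, N + 1, 1, N + 1), (2, N, 1, N + 1), (2, N + 1, 1, N)}

theorem jdNine_card (N : ℕ) : (jdNine N).card = 9 := by
  unfold jdNine
  simp [Finset.card_insert_of_notMem]

/-- Shift a parameter. -/
def jdSh (q : ℕ × ℕ × ℕ × ℕ) : ℕ × ℕ × ℕ × ℕ := (q.1 + 1, q.2.1 + 1, q.2.2.1 + 1, q.2.2.2 + 1)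

theorem jdSh_inj : Function.Injective jdSh := by
  rintro ⟨a, b, c, d⟩ ⟨a', b', c', d'⟩ h
  simp only [jdSh, Prod.mk.injEq] at h ⊢
  omega

theorem jdExp_shift {b1 b2 c1 c2 : ℕ} :
    jdExp (b1 + 1) (b2 + 1) (c1 + 1) (c2 + 1) ↔ jdExp b1 b2 c1 c2 := by
  unfold jdExp
  exact or_congr (by omega) (or_congr (by omega) (or_congr (by omega) (or_congr (by omega)
    (or_congr (by omega) (by omega)))))

set_option maxHeartbeats 2000000 in
theorem jdS_succ {N : ℕ} (hN : 5 ≤ N) : (jdS (N + 1)).card = (jdS N).card + 9 := by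
  rw [← jdNine_card N, ← Finset.card_image_of_injective (jdS N) jdSh_inj,
    ← Finset.card_union_of_disjoint]
  · congr 1
    ext ⟨b1, b2, c1, c2⟩
    rw [Finset.mem_union, Finset.mem_image, jdS_mem]
    constructor
    · rintro ⟨⟨h1, h2, h3⟩, h4⟩
      unfold jdVal at h1 h2
      by_cases h : b1 = 1 ∨ c1 = 1
      · right
        have h5 : b1 ≤ c1 + 1 ∧ c1 ≤ b1 + 1 ∧ b2 ≤ c2 + 1 ∧ c2 ≤ b2 + 1 := by
          unfold jdExp at h3
          omega
        clear h3
        have h6 : (b1 = 1 ∧ c1 = 1) ∨ (b1 = 1 ∧ c1 = 2) ∨ (b1 = 2 ∧ c1 = 1) := by omega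
        have h7 : (b2 = N + 1 ∧ c2 = N + 1) ∨ (b2 = N ∧ c2 = N + 1) ∨
          (b2 = N + 1 ∧ c2 = N) := by omega
        clear * - h6 h7
        rcases h6 with ⟨rfl, rfl⟩ | ⟨rfl, rfl⟩ | ⟨rfl, rfl⟩ <;>
        rcases h7 with ⟨rfl, rfl⟩ | ⟨rfl, rfl⟩ | ⟨rfl, rfl⟩ <;> simp [jdNine]
      · left
        obtain ⟨b1, rfl⟩ : ∃ k, b1 = k + 1 := ⟨b1 - 1, by omega⟩
        obtain ⟨b2, rfl⟩ : ∃ k, b2 = k + 1 := ⟨b2 - 1, by omega⟩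
        obtain ⟨c1, rfl⟩ : ∃ k, c1 = k + 1 := ⟨c1 - 1, by omega⟩
        obtain ⟨c2, rfl⟩ : ∃ k, c2 = k + 1 := ⟨c2 - 1, by omega⟩
        rw [jdExp_shift] at h3
        have h5 : b2 ≤ c2 + 2 ∧ c2 ≤ b2 + 2 := by
          unfold jdExp at h3
          omega
        refine ⟨(b1, b2, c1, c2), ?_, rfl⟩
        rw [jdS_mem]
        unfold jdVal
        exact ⟨⟨by omega, by omega, h3⟩, by omega⟩
    · rintro (⟨⟨b1, b2, c1, c2⟩, h, e⟩ | h)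
      · rw [jdS_mem] at h
        simp only [jdSh, Prod.mk.injEq] at e
        obtain ⟨rfl, rfl, rfl, rfl⟩ := e
        obtain ⟨⟨h1, h2, h3⟩, h4⟩ := h
        unfold jdVal at *
        exact ⟨⟨by omega, by omega, jdExp_shift.2 h3⟩, by omega⟩
      · simp only [jdNine, Finset.mem_insert, Finset.mem_singleton, Prod.mk.injEq] at h
        rcases h with h | h | h | h | h | h | h | h | h <;> obtain ⟨rfl, rfl, rfl, rfl⟩ := h <;>
          unfold jdVal jdExp <;>
          exact ⟨⟨by omega, by omega, Or.inr (Or.inr (Or.inr (Or.inl (by omega))))⟩, by omega⟩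
  · rw [Finset.disjoint_left]
    rintro ⟨b1, b2, c1, c2⟩ h1 h2
    rw [Finset.mem_image] at h1
    obtain ⟨⟨b1', b2', c1', c2'⟩, h, e⟩ := h1
    rw [jdS_mem] at h
    simp only [jdSh, Prod.mk.injEq] at e
    simp only [jdNine, Finset.mem_insert, Finset.mem_singleton, Prod.mk.injEq] at h2
    have h3 := h.1.1
    have h4 := h.1.2.1
    unfold jdVal at h3 h4
    clear h
    have : b1 = 1 ∨ c1 = 1 := by
      rcases h2 with h | h | h | h | h | h | h | h | h <;> omega
    omega

set_option maxRecDepth 100000 in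
theorem jdQ_five : (jdQ 5).card = 25 := by decide +kernel

set_option maxRecDepth 100000 in
theorem jdS_five : (jdS 5).card = 32 := by decide +kernel

theorem jdS_card (k : ℕ) : (jdS (k + 5)).card = 9 * k + 32 := by
  induction k with
  | zero => exact jdS_five
  | succ k ih =>
    rw [show k + 1 + 5 = (k + 5) + 1 by ring, jdS_succ (by omega), ih]
    ring

theorem jdQ_card (k : ℕ) : 2 * (jdQ (k + 5)).card = (k + 5) * (9 * k + 10) := by
  induction k with
  | zero => rw [jdQ_five]
  | succ k ih =>
    rw [show k + 1 + 5 = (k + 5) + 1 by ring, jdQ_succ, jdS_card, mul_add, ih]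
    ring

theorem jd_set {n : ℕ} (hn : 5 ≤ n) :
    {a : PElt n | a ∈ Jones n ∧ pmul a a = a ∧ (numPaths a : ℤ) = (n : ℤ) - 4} =
      (fun q : ℕ × ℕ × ℕ × ℕ => jdMk n q.1 q.2.1 q.2.2.1 q.2.2.2) '' (jdQ n : Set _) := by
  ext a
  constructor
  · rintro ⟨h1, h2, h3⟩
    obtain ⟨b1, b2, c1, c2, hb, hc, g, e⟩ := jd_surj hn h1 h2 (by omega)
    exact ⟨(b1, b2, c1, c2), Finset.mem_coe.2 (jdQ_mem.2 ⟨hb, hc, g⟩), e⟩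
  · rintro ⟨⟨b1, b2, c1, c2⟩, h, rfl⟩
    obtain ⟨hb, hc, g⟩ := jdQ_mem.1 (Finset.mem_coe.1 h)
    refine ⟨jdMk_mem hb hc, jdMk_idem hb hc g, ?_⟩
    simp only
    rw [jdMk_paths hb hc g]
    omega

theorem jd_count {n : ℕ} (hn : 5 ≤ n) : eJdot n ((n : ℤ) - 4) = (jdQ n).card := by
  unfold eJdot
  rw [jd_set hn]
  rw [Nat.card_coe_set_eq, Set.InjOn.ncard_image, Set.ncard_coe_finset]
  rintro ⟨b1, b2, c1, c2⟩ h ⟨b1', b2', c1', c2'⟩ h' e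
  obtain ⟨hb, hc, g⟩ := jdQ_mem.1 (Finset.mem_coe.1 h)
  obtain ⟨hb', hc', g'⟩ := jdQ_mem.1 (Finset.mem_coe.1 h')
  have := jdMk_inj hb hc hb' hc' e
  simp only [Prod.mk.injEq]
  exact this

/-- Proposition 6.5. For all `n ≥ 5`, the number of idempotents of
the Jones monoid `J_n` of rank `n − 4` is `e_{n;·,n−4} = (n/2)(9n − 35)`. -/
theorem jones_depth_two (n : ℕ) (hn : 5 ≤ n) :
    eJdot n ((n : ℤ) - 4) = n * (9 * n - 35) / 2 := by
  rw [jd_count hn]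
  obtain ⟨k, rfl⟩ : ∃ k, n = k + 5 := ⟨n - 5, by omega⟩
  have h := jdQ_card k
  have e : 9 * (k + 5) - 35 = 9 * k + 10 := by omega
  rw [e, ← h]
  omega
end
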